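/- arXiv:2311.06611 — 3 statements merged into one kernel-verified Lean document; each statement's English description precedes it below -/
import Mathlib

section
/- Let G=(V,E,I,T) be a finite inner Eulerian grapht. Then the maximal number of pairwise edge-disjoint T-paths in G equals (1/2) · Σ_{t∈T} λ_G(t, T−t), where λ_G(t, T−t) is the maximal number of pairwise edge-disjoint paths between t and T−t. -/
/-! Common definitions: graphts (multigraphs with terminals), walks, paths, cycles,
edge cuts, inner Eulerian graphts, path systems, linkages, Erdős–Menger cuts,
restriction (edge deletion) and contraction. -/

universe u v

/-- A *grapht*: a multigraph (no loops, parallel edges allowed) given by an incidence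
function `I : E → Sym2 V`, together with a set `T` of at least two terminal vertices. -/
structure Grapht (V : Type u) (E : Type v) where
  I : E → Sym2 V
  loopless : ∀ e : E, ¬ (I e).IsDiag
  T : Set V
  T_nontrivial : T.Nontrivial

namespace Grapht

variable {V : Type u} {E : Type v}

/-- `G.IsWalk vs es` holds when `vs` is the vertex sequence and `es` the edge sequence
of a walk in `G`. -/
inductive IsWalk (G : Grapht V E) : List V → List E → Prop
  | nil (v : V) : IsWalk G [v] []
  | cons {u w : V} {vs : List V} {e : E} {es : List E} :
      G.I e = s(u, w) → IsWalk G (w :: vs) es → IsWalk G (u :: w :: vs) (e :: es)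

/-- A finite path in the grapht `G` (no repeated vertices), with endpoints `first`, `last`. -/
structure Path (G : Grapht V E) where
  first : V
  last : V
  verts : List V
  edges : List E
  isWalk : G.IsWalk verts edges
  nodup : verts.Nodup
  head_eq : verts.head? = some first
  getLast_eq : verts.getLast? = some last

/-- A finite cycle in the grapht `G`. -/
structure Cycle (G : Grapht V E) where
  verts : List V
  edges : List E
  isWalk : G.IsWalk verts edges
  closed : verts.head? = verts.getLast?
  nontrivial : edges ≠ []
  edges_nodup : edges.Nodup
  tail_nodup : verts.tail.Nodup

variable {G : Grapht V E}

/-- The internal (inner) vertices of a path. -/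
def Path.inner (P : G.Path) : List V := (P.verts.drop 1).dropLast

/-- The edge set of a path. -/
def Path.edgeSet (P : G.Path) : Set E := {e | e ∈ P.edges}

/-- The edge set of a cycle. -/
def Cycle.edgeSet (C : G.Cycle) : Set E := {e | e ∈ C.edges}

variable (G)

/-- `δ_G(X)`: the set of edges with exactly one endpoint in `X`. -/
def edgeCut (X : Set V) : Set E :=
  {e | ∃ u w, G.I e = s(u, w) ∧ u ∈ X ∧ w ∉ X}

/-- A grapht is *inner Eulerian* if there is no `X ⊆ V ∖ T` whose cut `δ(X)` is a
finite set of odd size. -/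
def InnerEulerian : Prop :=
  ∀ X : Set V, Disjoint X G.T → ¬ ((G.edgeCut X).Finite ∧ Odd (G.edgeCut X).ncard)

/-- An `AB`-path: a path with first vertex in `A`, last vertex in `B` and no internal
vertex in `A ∪ B`. -/
def IsABPath (A B : Set V) (P : G.Path) : Prop :=
  P.first ∈ A ∧ P.last ∈ B ∧ ∀ v ∈ P.inner, v ∉ A ∪ B

/-- A `T`-path: a path between two distinct terminal vertices without internal
terminal vertices. -/
def IsTPath (P : G.Path) : Prop :=
  P.first ∈ G.T ∧ P.last ∈ G.T ∧ P.first ≠ P.last ∧ ∀ v ∈ P.inner, v ∉ G.T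

/-- A system of pairwise edge-disjoint paths. -/
def EdgeDisjoint (Ps : Set G.Path) : Prop :=
  Ps.Pairwise fun P Q => ∀ e, e ∈ P.edges → e ∉ Q.edges

/-- A system of pairwise edge-disjoint `T`-paths. -/
def IsTPathSystem (Ps : Set G.Path) : Prop :=
  G.EdgeDisjoint Ps ∧ ∀ P ∈ Ps, G.IsTPath P

/-- The set of edges used by a path system. -/
def sysEdges (Ps : Set G.Path) : Set E := ⋃ P ∈ Ps, P.edgeSet

/-- `C` is *orthogonal* to the path system `Ps`: `C` consists of exactly one edge from
each path of `Ps`. -/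
def Orthogonal (C : Set E) (Ps : Set G.Path) : Prop :=
  (∀ P ∈ Ps, ∃! e, e ∈ C ∧ e ∈ P.edges) ∧ ∀ e ∈ C, ∃ P ∈ Ps, e ∈ P.edges

/-- `C` separates `A` and `B`: every `AB`-path meets `C` (i.e. `G − C` has no `AB`-path). -/
def Separates (C : Set E) (A B : Set V) : Prop :=
  ∀ P : G.Path, G.IsABPath A B P → ∃ e ∈ C, e ∈ P.edges

/-- An `AB`-cut. -/
def IsABCut (A B : Set V) (C : Set E) : Prop :=
  ∀ P : G.Path, G.IsABPath A B P → ∃ e ∈ C, e ∈ P.edges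

/-- An Erdős–Menger `AB`-cut: an `AB`-cut orthogonal to some system of pairwise
edge-disjoint `AB`-paths. -/
def IsEMABCut (A B : Set V) (C : Set E) : Prop :=
  G.IsABCut A B C ∧
    ∃ Ps : Set G.Path, G.EdgeDisjoint Ps ∧ (∀ P ∈ Ps, G.IsABPath A B P) ∧ G.Orthogonal C Ps

/-- The order `⊴` on (Erdős–Menger) `AB`-cuts: on every `AB`-path the first edge of `C`
comes no later than the first edge of `C'`. -/
def ABCutLE (A B : Set V) (C C' : Set E) : Prop :=
  ∀ P : G.Path, G.IsABPath A B P →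
    ∀ i : Fin P.edges.length, P.edges.get i ∈ C' →
      ∃ j : Fin P.edges.length, (j : ℕ) ≤ (i : ℕ) ∧ P.edges.get j ∈ C

/-- `C` is the `⊴`-largest Erdős–Menger `AB`-cut. -/
def IsLargestEMABCut (A B : Set V) (C : Set E) : Prop :=
  G.IsEMABCut A B C ∧ ∀ C', G.IsEMABCut A B C' → G.ABCutLE A B C' C

/-- A system `Ps` of pairwise edge-disjoint `T`-paths *links* the terminal `t`:
it covers `δ(t)`. -/
def Links (Ps : Set G.Path) (t : V) : Prop :=
  G.IsTPathSystem Ps ∧ ∀ e ∈ G.edgeCut {t}, ∃ P ∈ Ps, e ∈ P.edges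

/-- The terminal `t` is linked. -/
def Linked (t : V) : Prop := ∃ Ps : Set G.Path, G.Links Ps t

/-- The linkability condition: every terminal is linked. -/
def LinkabilityCondition : Prop := ∀ t ∈ G.T, G.Linked t

/-- A perfect linkage: a system of pairwise edge-disjoint `T`-paths linking every
terminal. -/
def IsPerfectLinkage (Ps : Set G.Path) : Prop :=
  G.IsTPathSystem Ps ∧ ∀ t ∈ G.T, ∀ e ∈ G.edgeCut {t}, ∃ P ∈ Ps, e ∈ P.edges

/-- In the two-terminal setting: a system of pairwise edge-disjoint `st`-paths
covering `δ(s)` (a linkage of `s`). -/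
def IsStLinkage (s t : V) (Ps : Set G.Path) : Prop :=
  G.EdgeDisjoint Ps ∧ (∀ P ∈ Ps, G.IsABPath {s} {t} P) ∧
    ∀ e ∈ G.edgeCut {s}, ∃ P ∈ Ps, e ∈ P.edges

/-- `s` is linked (two-terminal setting). -/
def StLinked (s t : V) : Prop := ∃ Ps : Set G.Path, G.IsStLinkage s t Ps

/-- `λ_G(A,B)`: the maximal number of pairwise edge-disjoint `AB`-paths. -/
noncomputable def lambda (A B : Set V) : ℕ :=
  sSup {n : ℕ | ∃ Ps : Set G.Path, G.EdgeDisjoint Ps ∧ (∀ P ∈ Ps, G.IsABPath A B P) ∧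
    Ps.Finite ∧ Ps.ncard = n}

/-- The grapht obtained by deleting all edges outside `F`. -/
def restrict (F : Set E) : Grapht V F where
  I e := G.I e.1
  loopless e := G.loopless e.1
  T := G.T
  T_nontrivial := G.T_nontrivial

/-- The map sending every vertex of a contracted set `X t` (`t ∈ T`) to `t`. -/
noncomputable def contractMap (X : V → Set V) : V → V := fun v =>
  letI := Classical.dec (∃ u ∈ G.T, v ∈ X u)
  if h : ∃ u ∈ G.T, v ∈ X u then h.choose else v

/-- The contraction `G/ℱ` of the family `ℱ = {X t : t ∈ T}`: each `X t` is contracted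
to `t` and the arising loops are deleted. -/
noncomputable def contract (X : V → Set V) :
    Grapht V {e : E // ¬ ((G.I e).map (G.contractMap X)).IsDiag} where
  I e := (G.I e.1).map (G.contractMap X)
  loopless e := e.2
  T := G.T
  T_nontrivial := G.T_nontrivial

end Grapht

open scoped Classical in
/-- Indicator (in `ℤ`) that the pair `z` crosses the set `X`. -/
noncomputable def lcCr {V : Type u} (X : Set V) (z : Sym2 V) : ℤ :=
  if ∃ a b, z = s(a, b) ∧ a ∈ X ∧ b ∉ X then 1 else 0

open scoped Classical in
theorem lcCr_mk {V : Type u} (X : Set V) (a b : V) :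
    lcCr X s(a, b) = if (a ∈ X ↔ b ∈ X) then 0 else 1 := by
  unfold lcCr
  have : (∃ a' b', s(a, b) = s(a', b') ∧ a' ∈ X ∧ b' ∉ X) ↔ ¬ (a ∈ X ↔ b ∈ X) := by
    constructor
    · rintro ⟨a', b', h, h1, h2⟩
      rcases Sym2.eq_iff.1 h with ⟨rfl, rfl⟩ | ⟨rfl, rfl⟩ <;> tauto
    · intro h
      by_cases ha : a ∈ X
      · exact ⟨a, b, rfl, ha, fun hb => h (by tauto)⟩
      · exact ⟨b, a, Sym2.eq_swap, by tauto, ha⟩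
  simp only [this]
  split_ifs <;> simp_all

theorem lcCr_nonneg {V : Type u} (X : Set V) (z : Sym2 V) : 0 ≤ lcCr X z := by
  unfold lcCr; split_ifs <;> simp

/-- The cut function of the edges in `S`. -/
noncomputable def lcD {V : Type u} {E : Type v} (S : Finset E) (I : E → Sym2 V) (X : Set V) : ℤ :=
  ∑ e ∈ S, lcCr X (I e)

section
variable {V : Type u} {E : Type v}

theorem lcD_sub (S : Finset E) (I : E → Sym2 V) (X Y : Set V) :
    lcD S I (X ∩ Y) + lcD S I (X ∪ Y) ≤ lcD S I X + lcD S I Y := by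
  unfold lcD
  rw [← Finset.sum_add_distrib, ← Finset.sum_add_distrib]
  refine Finset.sum_le_sum fun e _ => ?_
  induction I e using Sym2.ind with
  | _ a b =>
    simp only [lcCr_mk, Set.mem_inter_iff, Set.mem_union]
    by_cases h1 : a ∈ X <;> by_cases h2 : b ∈ X <;> by_cases h3 : a ∈ Y <;>
      by_cases h4 : b ∈ Y <;> simp [h1, h2, h3, h4]

theorem lcD_posi (S : Finset E) (I : E → Sym2 V) (X Y : Set V) :
    lcD S I (X \ Y) + lcD S I (Y \ X) ≤ lcD S I X + lcD S I Y := by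
  unfold lcD
  rw [← Finset.sum_add_distrib, ← Finset.sum_add_distrib]
  refine Finset.sum_le_sum fun e _ => ?_
  induction I e using Sym2.ind with
  | _ a b =>
    simp only [lcCr_mk, Set.mem_sdiff]
    by_cases h1 : a ∈ X <;> by_cases h2 : b ∈ X <;> by_cases h3 : a ∈ Y <;>
      by_cases h4 : b ∈ Y <;> simp [h1, h2, h3, h4]

theorem lcD_posi_strict (S : Finset E) (I : E → Sym2 V) (X Y : Set V) {e : E} (he : e ∈ S)
    {x y : V} (hI : I e = s(x, y)) (h1 : x ∈ X) (h2 : x ∈ Y) (h3 : y ∉ X) (h4 : y ∉ Y) :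
    lcD S I (X \ Y) + lcD S I (Y \ X) < lcD S I X + lcD S I Y := by
  unfold lcD
  rw [← Finset.sum_add_distrib, ← Finset.sum_add_distrib]
  refine Finset.sum_lt_sum (fun e _ => ?_) ⟨e, he, ?_⟩
  · induction I e using Sym2.ind with
    | _ a b =>
      simp only [lcCr_mk, Set.mem_sdiff]
      by_cases h1 : a ∈ X <;> by_cases h2 : b ∈ X <;> by_cases h3 : a ∈ Y <;>
        by_cases h4 : b ∈ Y <;> simp [h1, h2, h3, h4]
  · rw [hI]; simp [lcCr_mk, h1, h2, h3, h4]

theorem lcD_symm (S : Finset E) (I : E → Sym2 V) (X Y : Set V) :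
    Even (lcD S I X + lcD S I Y + lcD S I ((X \ Y) ∪ (Y \ X))) := by
  unfold lcD
  rw [← Finset.sum_add_distrib, ← Finset.sum_add_distrib]
  refine Finset.sum_induction _ _ (fun _ _ => Even.add) (by simp) fun e _ => ?_
  induction I e using Sym2.ind with
  | _ a b =>
    simp only [lcCr_mk, Set.mem_sdiff, Set.mem_union]
    by_cases h1 : a ∈ X <;> by_cases h2 : b ∈ X <;> by_cases h3 : a ∈ Y <;>
      by_cases h4 : b ∈ Y <;> simp [h1, h2, h3, h4]

theorem lcD_remove (S : Finset E) (I : E → Sym2 V) (X : Set V) (v : V) (hv : v ∈ X)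
    (h : ∀ e ∈ S, ∀ w, w ≠ v → I e = s(v, w) → w ∉ X) :
    lcD S I (X \ {v}) + lcD S I {v} = lcD S I X := by
  unfold lcD
  rw [← Finset.sum_add_distrib]
  refine Finset.sum_congr rfl fun e he => ?_
  have h' := h e he
  generalize I e = z at h'
  induction z using Sym2.ind with
  | _ a b =>
    simp only [lcCr_mk, Set.mem_sdiff, Set.mem_singleton_iff]
    by_cases h1 : a = v
    · subst h1
      by_cases h2 : b = a
      · simp [h2]
      · have := h' b h2 rfl
        simp [h2, this, hv]
    · by_cases h2 : b = v
      · subst h2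
        have := h' a h1 Sym2.eq_swap
        simp [h1, this, hv]
      · simp [h1, h2]
        by_cases h3 : a ∈ X <;> by_cases h4 : b ∈ X <;> simp [h1, h2, h3, h4]

theorem lcD_add (S : Finset E) (I : E → Sym2 V) (X : Set V) (v : V) (hv : v ∉ X)
    (h : ∀ e ∈ S, ∀ w, w ≠ v → I e = s(v, w) → w ∈ X) :
    lcD S I (X ∪ {v}) + lcD S I {v} = lcD S I X := by
  unfold lcD
  rw [← Finset.sum_add_distrib]
  refine Finset.sum_congr rfl fun e he => ?_
  have h' := h e he
  generalize I e = z at h'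
  induction z using Sym2.ind with
  | _ a b =>
    simp only [lcCr_mk, Set.mem_union, Set.mem_singleton_iff]
    by_cases h1 : a = v
    · subst h1
      by_cases h2 : b = a
      · simp [h2]
      · have := h' b h2 rfl
        simp [h2, this, hv]
    · by_cases h2 : b = v
      · subst h2
        have := h' a h1 Sym2.eq_swap
        simp [h1, this, hv]
      · simp [h1, h2]
        by_cases h3 : a ∈ X <;> by_cases h4 : b ∈ X <;> simp [h1, h2, h3, h4]

/-- `X` meets `T` exactly in `t`. -/
def lcTS (T : Set V) (t : V) (X : Set V) : Prop := ∀ r ∈ T, r ∈ X ↔ r = t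

/-- The splitting lemma: some pair at `v` can be split off. -/
theorem lc_split [Finite V] (T : Set V) (S : Finset E) (I : E → Sym2 V) (c : V → ℤ)
    (hc : ∀ t ∈ T, ∀ X, lcTS T t X → c t ≤ lcD S I X)
    (t v : V) (ht : t ∈ T) (hv : v ∉ T) (hev : Even (lcD S I {v}))
    (e₁ : E) (he₁ : e₁ ∈ S) (hI : I e₁ = s(v, t)) :
    ∃ e₂ ∈ S, e₂ ≠ e₁ ∧ ∃ w, w ≠ v ∧ I e₂ = s(v, w) ∧
      ∀ s ∈ T, ∀ X, lcTS T s X → lcD S I X = c s → ¬ (v ∉ X ∧ t ∈ X ∧ w ∈ X) ∧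
        ¬ (v ∈ X ∧ t ∉ X ∧ w ∉ X) := by
  classical
  have htv : t ≠ v := fun h => hv (h ▸ ht)
  have hpos : 1 ≤ lcD S I {v} := by
    unfold lcD
    have := Finset.single_le_sum (f := fun e => lcCr {v} (I e)) (fun e _ => lcCr_nonneg _ _) he₁
    simp only [hI, lcCr_mk] at this
    simpa [htv] using this
  by_contra! hbad
  -- type A : tight `t`-sets avoiding `v`
  have hA : (∃ A, lcTS T t A ∧ lcD S I A = c t ∧ v ∉ A ∧
      ∀ X, lcTS T t X → lcD S I X = c t → v ∉ X → X ⊆ A) ∨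
      (∀ X, lcTS T t X → lcD S I X = c t → v ∉ X → False) := by
    by_cases hex : ∃ X, lcTS T t X ∧ lcD S I X = c t ∧ v ∉ X
    · left
      obtain ⟨A, hAm⟩ := (Set.toFinite {X | lcTS T t X ∧ lcD S I X = c t ∧ v ∉ X}).exists_maximal hex
      refine ⟨A, hAm.1.1, hAm.1.2.1, hAm.1.2.2, fun X h1 h2 h3 => ?_⟩
      have hi : lcTS T t (A ∩ X) := fun r hr => by
        have := hAm.1.1 r hr; have := h1 r hr; simp only [Set.mem_inter_iff]; tauto
      have hu : lcTS T t (A ∪ X) := fun r hr => by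
        have := hAm.1.1 r hr; have := h1 r hr; simp only [Set.mem_union]; tauto
      have k1 := hc t ht _ hi
      have k2 := hc t ht _ hu
      have k3 := lcD_sub S I A X
      have k4 := hAm.1.2.1
      have : A ∪ X ⊆ A := hAm.2 ⟨hu, by linarith, by
        have := hAm.1.2.2; simp only [Set.mem_union]; tauto⟩ Set.subset_union_left
      exact Set.subset_union_right.trans this
    · right
      exact fun X h1 h2 h3 => hex ⟨X, h1, h2, h3⟩
  have hB : (∃ s ∈ T, s ≠ t ∧ ∃ B, lcTS T s B ∧ lcD S I B = c s ∧ v ∈ B ∧ 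
      ∀ r ∈ T, ∀ X, lcTS T r X → lcD S I X = c r → v ∈ X → t ∉ X → B ⊆ X) ∨
      (∀ r ∈ T, ∀ X, lcTS T r X → lcD S I X = c r → v ∈ X → t ∉ X → False) := by
    by_cases hex : ∃ s ∈ T, ∃ X, lcTS T s X ∧ lcD S I X = c s ∧ v ∈ X ∧ t ∉ X
    · left
      obtain ⟨s, hs, hex⟩ := hex
      obtain ⟨B, hBm⟩ := (Set.toFinite
        {X | lcTS T s X ∧ lcD S I X = c s ∧ v ∈ X ∧ t ∉ X}).exists_minimal hex
      obtain ⟨b1, b2, b3, b4⟩ := hBm.1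
      have hst : s ≠ t := by
        rintro rfl
        exact b4 ((b1 s hs).2 rfl)
      refine ⟨s, hs, hst, B, b1, b2, b3, fun r hr X h1 h2 h3 h4 => ?_⟩
      by_cases hrs : r = s
      · subst hrs
        have hi : lcTS T r (B ∩ X) := fun r hr => by
          have := b1 r hr; have := h1 r hr; simp only [Set.mem_inter_iff]; tauto
        have hu : lcTS T r (B ∪ X) := fun r hr => by
          have := b1 r hr; have := h1 r hr; simp only [Set.mem_union]; tauto
        have k1 := hc r hr _ hi
        have k2 := hc r hr _ hu
        have k3 := lcD_sub S I B X
        have : B ⊆ B ∩ X := hBm.2 ⟨hi, by linarith, ⟨b3, h3⟩, fun h => b4 h.1⟩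
          Set.inter_subset_left
        exact this.trans Set.inter_subset_right
      · exfalso
        have k := lcD_posi_strict S I B X he₁ hI b3 h3 b4 h4
        have hi : lcTS T s (B \ X) := fun q hq => by
          have := b1 q hq; have := h1 q hq; simp only [Set.mem_sdiff]; grind
        have hu : lcTS T r (X \ B) := fun q hq => by
          have := b1 q hq; have := h1 q hq; simp only [Set.mem_sdiff]; grind
        have k1 := hc s hs _ hi
        have k2 := hc r hr _ hu
        linarith
    · right
      exact fun r hr X h1 h2 h3 h4 => hex ⟨r, hr, X, h1, h2, h3, h4⟩
  have hbad' : ∀ e₂ ∈ S, e₂ ≠ e₁ → ∀ w, w ≠ v → I e₂ = s(v, w) → 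
      (∃ X, lcTS T t X ∧ lcD S I X = c t ∧ v ∉ X ∧ w ∈ X) ∨
      (∃ r ∈ T, ∃ X, lcTS T r X ∧ lcD S I X = c r ∧ v ∈ X ∧ t ∉ X ∧ w ∉ X) := by
    intro e₂ h1 h2 w h3 h4
    obtain ⟨s, hs, X, hX, hd, h⟩ := hbad e₂ h1 h2 w h3 h4
    by_cases hh : v ∉ X ∧ t ∈ X ∧ w ∈ X
    · left
      have : t = s := (hX t ht).1 hh.2.1
      subst this
      exact ⟨X, hX, hd, hh.1, hh.2.2⟩
    · right
      exact ⟨s, hs, X, hX, hd, h (by tauto)⟩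
  have edge1 : ∀ w, I e₁ = s(v, w) → w = t := by
    intro w hw
    rw [hI] at hw
    rcases Sym2.eq_iff.1 hw with ⟨_, h⟩ | ⟨h, h'⟩
    · exact h.symm
    · rw [h', h]
  have contraB : ∀ s ∈ T, ∀ B, lcTS T s B → lcD S I B = c s → v ∈ B → 
      (∀ e ∈ S, ∀ w, w ≠ v → I e = s(v, w) → w ∉ B) → False := by
    intro s hs B b1 b2 b3 h
    have k := lcD_remove S I B v b3 h
    have : lcTS T s (B \ {v}) := fun q hq => by
      have := b1 q hq
      have : q ≠ v := fun h => hv (h ▸ hq)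
      simp only [Set.mem_sdiff, Set.mem_singleton_iff]; tauto
    have := hc s hs _ this
    linarith
  rcases hA with ⟨A, a1, a2, a3, a4⟩ | hA
  · have htA : t ∈ A := (a1 t ht).2 rfl
    rcases hB with ⟨s, hs, hst, B, b1, b2, b3, b4⟩ | hB
    · have hi : lcTS T t (A \ B) := fun q hq => by
        have := a1 q hq; have := b1 q hq; simp only [Set.mem_sdiff]; grind
      have hu : lcTS T s (B \ A) := fun q hq => by
        have := a1 q hq; have := b1 q hq; simp only [Set.mem_sdiff]; grind
      have k1 := hc t ht _ hi
      have k2 := hc s hs _ hu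
      have k3 := lcD_posi S I A B
      refine contraB s hs _ hu (by linarith) ⟨b3, a3⟩ ?_
      intro e he w hw hIe hwB
      by_cases hee : e = e₁
      · subst hee
        rw [edge1 w hIe] at hwB
        exact hwB.2 htA
      · rcases hbad' e he hee w hw hIe with ⟨X, h1, h2, h3, h4⟩ | ⟨r, hr, X, h1, h2, h3, h4, h5⟩
        · exact hwB.2 (a4 X h1 h2 h3 h4)
        · exact h5 (b4 r hr X h1 h2 h3 h4 hwB.1)
    · have k := lcD_add S I A v a3 (by
        intro e he w hw hIe
        by_cases hee : e = e₁
        · subst hee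
          rw [edge1 w hIe]; exact htA
        · rcases hbad' e he hee w hw hIe with ⟨X, h1, h2, h3, h4⟩ | ⟨r, hr, X, h1, h2, h3, h4, h5⟩
          · exact a4 X h1 h2 h3 h4
          · exact (hB r hr X h1 h2 h3 h4).elim)
      have : lcTS T t (A ∪ {v}) := fun q hq => by
        have := a1 q hq
        have : q ≠ v := fun h => hv (h ▸ hq)
        simp only [Set.mem_union, Set.mem_singleton_iff]; tauto
      have := hc t ht _ this
      linarith
  · rcases hB with ⟨s, hs, hst, B, b1, b2, b3, b4⟩ | hB
    · refine contraB s hs _ b1 b2 b3 ?_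
      intro e he w hw hIe hwB
      by_cases hee : e = e₁
      · subst hee
        rw [edge1 w hIe] at hwB
        exact hst.symm ((b1 t ht).1 hwB)
      · rcases hbad' e he hee w hw hIe with ⟨X, h1, h2, h3, h4⟩ | ⟨r, hr, X, h1, h2, h3, h4, h5⟩
        · exact hA X h1 h2 h3
        · exact h5 (b4 r hr X h1 h2 h3 h4 hwB)
    · have : lcD S I {v} = 1 := by
        unfold lcD
        rw [Finset.sum_eq_single_of_mem e₁ he₁]
        · rw [hI, lcCr_mk]; simp [htv]
        · intro e he hee
          have key : ∀ w, w ≠ v → I e = s(v, w) → False := by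
            intro w hw hIe
            rcases hbad' e he hee w hw hIe with ⟨X, h1, h2, h3, h4⟩ | ⟨r, hr, X, h1, h2, h3, h4, h5⟩
            · exact hA X h1 h2 h3
            · exact hB r hr X h1 h2 h3 h4
          unfold lcCr
          rw [if_neg]
          rintro ⟨a, b, h, h1, h2⟩
          obtain rfl : a = v := h1
          exact key b h2 h
      rw [this] at hev
      exact absurd hev (by decide)

/-- Connectivity through the edges in `F`. -/
def lcConn (I : E → Sym2 V) (F : Finset E) : V → V → Prop :=
  Relation.ReflTransGen fun a b => ∃ e ∈ F, I e = s(a, b)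

theorem lc_main [Finite V] (T : Finset V) (n : ℕ) : ∀ (S : Finset E) (I : E → Sym2 V) (c : V → ℤ),
    S.card = n →
    (∀ t ∈ T, ∀ X, lcTS (T : Set V) t X → c t ≤ lcD S I X ∧ Even (lcD S I X - c t)) →
    (∀ v ∉ T, Even (lcD S I {v})) →
    ∃ (k : ℕ) (f : Fin k → Finset E), (∀ i, f i ⊆ S) ∧ Pairwise (fun i j => Disjoint (f i) (f j)) ∧
      (∀ i, ∃ s ∈ T, ∃ t ∈ T, s ≠ t ∧ lcConn I (f i) s t) ∧ ∑ t ∈ T, c t ≤ 2 * k := by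
  classical
  induction n with
  | zero =>
    intro S I c hS hc _
    have : S = ∅ := Finset.card_eq_zero.1 hS
    subst this
    refine ⟨0, Fin.elim0, fun i => i.elim0, fun i => i.elim0, fun i => i.elim0, ?_⟩
    have := Finset.sum_nonpos (s := T) (f := c) fun t ht => by
      simpa [lcD] using (hc t ht {t} (fun r _ => by simp)).1
    simpa using this
  | succ n ih =>
    intro S I c hS hc hev
    by_cases hterm : ∃ t ∈ T, ∃ e ∈ S, ∃ v, v ≠ t ∧ I e = s(v, t)
    swap
    · refine ⟨0, Fin.elim0, fun i => i.elim0, fun i => i.elim0, fun i => i.elim0, ?_⟩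
      have := Finset.sum_nonpos (s := T) (f := c) fun t ht => by
        refine (hc t ht {t} (fun r _ => by simp)).1.trans (le_of_eq ?_)
        refine Finset.sum_eq_zero fun e he => ?_
        unfold lcCr
        rw [if_neg]
        rintro ⟨a, b, h, h1, h2⟩
        obtain rfl : a = t := h1
        exact hterm ⟨a, ht, e, he, b, h2, h.trans Sym2.eq_swap⟩
      simpa using this
    obtain ⟨t, ht, e₁, he₁, v, hvt, hI⟩ := hterm
    by_cases hvT : v ∈ T
    · -- an edge between two terminals
      have hD : ∀ X, lcD S I X = lcD (S.erase e₁) I X + lcCr X s(v, t) := by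
        intro X; unfold lcD; rw [← Finset.sum_erase_add _ _ he₁, hI]
      obtain ⟨k, f, h1, h2, h3, h4⟩ := ih (S.erase e₁) I
        (fun x => c x - (if x = v then 1 else 0) - (if x = t then 1 else 0))
        (by rw [Finset.card_erase_of_mem he₁, hS]; rfl)
        (by
          intro s hs X hX
          have hcs := hc s hs X hX
          rw [hD X, lcCr_mk] at hcs
          have q1 := hX v hvT
          have q2 := hX t ht
          simp only [q1, q2] at hcs
          by_cases r1 : s = v
          · subst r1
            simp only [hvt, hvt.symm, if_true, if_false, iff_false, not_true, sub_zero] at hcs ⊢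
            refine ⟨by linarith [hcs.1], ?_⟩
            convert hcs.2 using 1; ring
          · by_cases r2 : s = t
            · subst r2
              simp only [hvt, hvt.symm, if_true, if_false, false_iff, not_true, sub_zero] at hcs ⊢
              refine ⟨by linarith [hcs.1], ?_⟩
              convert hcs.2 using 1; ring
            · simpa [r1, r2, Ne.symm r1, Ne.symm r2, eq_comm] using hcs)
        (by
          intro x hx
          have := hev x hx
          rw [hD, lcCr_mk] at this
          have q1 : v ≠ x := fun h => hx (h ▸ hvT)
          have q2 : t ≠ x := fun h => hx (h ▸ ht)
          simpa [q1, q2] using this)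
      refine ⟨k + 1, Fin.cons {e₁} f, ?_, ?_, ?_, ?_⟩
      · intro i
        refine Fin.cases ?_ (fun i => ?_) i
        · simpa using he₁
        · simpa using (h1 i).trans (Finset.erase_subset _ _)
      · have hd : ∀ i, e₁ ∉ f i := fun i h => by simpa using h1 i h
        intro i j
        refine Fin.cases ?_ (fun i => ?_) i <;> refine Fin.cases ?_ (fun j => ?_) j
        · simp
        · intro _; simpa using hd j
        · intro _; simpa using hd i
        · intro hij
          simpa using h2 (fun h => hij (by rw [h]))
      · intro i
        refine Fin.cases ?_ (fun i => ?_) i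
        · exact ⟨v, hvT, t, ht, hvt, Relation.ReflTransGen.single ⟨e₁, by simp, hI⟩⟩
        · simpa using h3 i
      · simp only [Finset.sum_sub_distrib, Finset.sum_ite_eq', hvT, ht, if_true] at h4
        push_cast
        linarith
    · -- split off
      obtain ⟨e₂, he₂, hne, w, hwv, hI₂, hgood⟩ := lc_split (T : Set V) S I c
        (fun t ht X hX => (hc t ht X hX).1) t v ht hvT (hev v hvT) e₁ he₁ hI
      set I' := Function.update I e₁ s(t, w) with hI'
      have he₁' : e₁ ∈ S.erase e₂ := Finset.mem_erase.2 ⟨hne.symm, he₁⟩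
      have hD : ∀ X, lcD S I X = lcD (S.erase e₂) I' X - lcCr X s(t, w) + lcCr X s(v, t)
          + lcCr X s(v, w) := by
        intro X
        unfold lcD
        rw [← Finset.sum_erase_add _ _ he₂, ← Finset.sum_erase_add _ _ he₁', hI, hI₂,
          ← Finset.sum_erase_add (S.erase e₂) (fun e => lcCr X (I' e)) he₁']
        have : I' e₁ = s(t, w) := by simp [hI']
        rw [this]
        have : ∑ x ∈ (S.erase e₂).erase e₁, lcCr X (I' x) =
            ∑ x ∈ (S.erase e₂).erase e₁, lcCr X (I x) := by
          refine Finset.sum_congr rfl fun x hx => ?_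
          rw [hI', Function.update_of_ne (Finset.ne_of_mem_erase hx)]
        rw [this]; ring
      obtain ⟨k, f, h1, h2, h3, h4⟩ := ih (S.erase e₂) I' c
        (by rw [Finset.card_erase_of_mem he₂, hS]; rfl)
        (by
          intro s hs X hX
          obtain ⟨g1, g2⟩ := hc s hs X hX
          have g3 := hgood s hs X hX
          have hDX := hD X
          simp only [lcCr_mk] at hDX
          obtain ⟨m, hm⟩ := g2
          by_cases k1 : v ∈ X <;> by_cases k2 : t ∈ X <;> by_cases k3 : w ∈ X <;>
            simp only [k1, k2, k3, iff_true, iff_false, true_iff, false_iff, not_true, not_false_iff,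
              if_true, if_false, and_true, true_and, and_false, false_and] at hDX g3 <;>
            first
            | exact ⟨by linarith, m, by linarith⟩
            | (refine ⟨?_, m - 1, by linarith⟩
               by_contra hcon
               have : lcD S I X = c s := by omega
               simp [this] at g3))
        (by
          intro x hx
          have := hev x hx
          rw [hD] at this
          simp only [lcCr_mk] at this
          obtain ⟨m, hm⟩ := this
          by_cases k1 : v ∈ ({x} : Set V) <;> by_cases k2 : t ∈ ({x} : Set V) <;>
            by_cases k3 : w ∈ ({x} : Set V) <;>
            simp only [k1, k2, k3, iff_true, iff_false, true_iff, false_iff, not_true, not_false_iff,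
              if_true, if_false] at hm <;>
            first
            | exact ⟨m, by linarith⟩
            | exact ⟨m - 1, by linarith⟩)
      have hd : ∀ i, e₂ ∉ f i := fun i h => by simpa using h1 i h
      refine ⟨k, fun i => if e₁ ∈ f i then insert e₂ (f i) else f i, ?_, ?_, ?_, h4⟩
      · intro i
        have := (h1 i).trans (Finset.erase_subset _ _)
        dsimp only
        split_ifs
        · exact Finset.insert_subset he₂ this
        · exact this
      · intro i j hij
        have := h2 hij
        dsimp only
        split_ifs with q1 q2 q2
        · exact ((Finset.disjoint_left.1 this) q1 q2).elim
        · simpa [hd j] using this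
        · simpa [hd i] using this
        · exact this
      · intro i
        obtain ⟨s, hs, r, hr, hsr, hconn⟩ := h3 i
        refine ⟨s, hs, r, hr, hsr, ?_⟩
        dsimp only
        clear hs hr hsr
        unfold lcConn at hconn
        induction hconn using Relation.ReflTransGen.trans_induction_on with
        | refl => exact Relation.ReflTransGen.refl
        | trans _ _ i1 i2 => exact Relation.ReflTransGen.trans i1 i2
        | single hab =>
          obtain ⟨e, he, hIe⟩ := hab
          by_cases hee : e = e₁
          · subst hee
            rw [if_pos he]
            have tv : (fun a b => ∃ e' ∈ insert e₂ (f i), I e' = s(a, b)) t v :=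
              ⟨e, by simp [he], hI.trans Sym2.eq_swap⟩
            have vt : (fun a b => ∃ e' ∈ insert e₂ (f i), I e' = s(a, b)) v t :=
              ⟨e, by simp [he], hI⟩
            have vw : (fun a b => ∃ e' ∈ insert e₂ (f i), I e' = s(a, b)) v w :=
              ⟨e₂, by simp, hI₂⟩
            have wv : (fun a b => ∃ e' ∈ insert e₂ (f i), I e' = s(a, b)) w v :=
              ⟨e₂, by simp, hI₂.trans Sym2.eq_swap⟩
            have : I' e = s(t, w) := by simp [hI']
            rw [this] at hIe
            rcases Sym2.eq_iff.1 hIe with ⟨rfl, rfl⟩ | ⟨rfl, rfl⟩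
            · exact (Relation.ReflTransGen.single tv).tail vw
            · exact (Relation.ReflTransGen.single wv).tail vt
          · refine Relation.ReflTransGen.single ⟨e, ?_, ?_⟩
            · split_ifs
              · exact Finset.mem_insert_of_mem he
              · exact he
            · rw [← hIe, hI', Function.update_of_ne hee]

end
namespace Grapht
variable {V : Type u} {E : Type v} {G : Grapht V E}

theorem lc_walk_concat {vs : List V} {es : List E} (h : G.IsWalk vs es) {a b : V} {e : E}
    (hl : vs.getLast? = some a) (he : G.I e = s(a, b)) : G.IsWalk (vs ++ [b]) (es ++ [e]) := by
  induction h with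
  | nil v =>
    simp at hl
    subst hl
    exact IsWalk.cons he (IsWalk.nil b)
  | cons h1 h2 ih =>
    have := ih (by simpa using hl)
    exact IsWalk.cons h1 this

theorem lc_walk_reverse {vs : List V} {es : List E} (h : G.IsWalk vs es) :
    G.IsWalk vs.reverse es.reverse := by
  induction h with
  | nil v => exact IsWalk.nil v
  | @cons u w vs e es h1 h2 ih =>
    rw [List.reverse_cons, List.reverse_cons (a := e)]
    exact lc_walk_concat ih (a := w) (by simp) (h1.trans Sym2.eq_swap)

theorem lc_walk_suffix {l₁ : List V} : ∀ {a : V} {l₂ : List V} {es : List E},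
    G.IsWalk (l₁ ++ a :: l₂) es → ∃ es₂, G.IsWalk (a :: l₂) es₂ ∧ ∀ e ∈ es₂, e ∈ es := by
  induction l₁ with
  | nil => exact fun {a l₂ es} h => ⟨es, h, fun _ => id⟩
  | cons x l ih =>
    intro a l₂ es h
    cases l with
    | nil =>
      cases h with
      | cons h1 h2 => exact ⟨_, h2, fun e he => List.mem_cons_of_mem _ he⟩
    | cons y l =>
      cases h with
      | cons h1 h2 =>
        obtain ⟨es₂, h3, h4⟩ := ih h2
        exact ⟨es₂, h3, fun e he => List.mem_cons_of_mem _ (h4 e he)⟩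

/-- Reversal of a path. -/
def lcRev (P : G.Path) : G.Path where
  first := P.last
  last := P.first
  verts := P.verts.reverse
  edges := P.edges.reverse
  isWalk := lc_walk_reverse P.isWalk
  nodup := List.nodup_reverse.2 P.nodup
  head_eq := by rw [List.head?_reverse]; exact P.getLast_eq
  getLast_eq := by rw [List.getLast?_reverse]; exact P.head_eq

theorem lcRev_rev (P : G.Path) : lcRev (lcRev P) = P := by
  cases P; simp [lcRev]

theorem lcRev_inner (P : G.Path) (v : V) : v ∈ (lcRev P).inner ↔ v ∈ P.inner := by
  unfold Path.inner lcRev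
  simp only [List.drop_one]
  rw [List.tail_reverse, List.dropLast_reverse, List.mem_reverse, List.tail_dropLast]

theorem lc_walk_cross {vs : List V} {es : List E} (h : G.IsWalk vs es) (X : Set V) : ∀ {a b : V},
    vs.head? = some a → vs.getLast? = some b → a ∈ X → b ∉ X → ∃ e ∈ es, e ∈ G.edgeCut X := by
  induction h with
  | nil v =>
    intro a b h1 h2 h3 h4
    simp at h1 h2
    subst h1 h2
    exact (h4 h3).elim
  | @cons u w vs e es h1 h2 ih =>
    intro a b k1 k2 k3 k4
    simp at k1
    subst k1
    by_cases hw : w ∈ X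
    · obtain ⟨e', he', h⟩ := ih (a := w) (b := b) rfl (by simpa using k2) hw k4
      exact ⟨e', List.mem_cons_of_mem _ he', h⟩
    · exact ⟨e, List.mem_cons_self, u, w, h1, k3, hw⟩

theorem lc_path_cross (P : G.Path) (X : Set V) (h1 : P.first ∈ X) (h2 : P.last ∉ X) :
    ∃ e ∈ P.edges, e ∈ G.edgeCut X :=
  lc_walk_cross P.isWalk X P.head_eq P.getLast_eq h1 h2

theorem lc_edges_ne (P : G.Path) (h : P.first ≠ P.last) : ∃ e, e ∈ P.edges := by
  obtain ⟨e, he, _⟩ := lc_path_cross P {P.first} rfl (fun h' => h h'.symm)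
  exact ⟨e, he⟩

/-- An edge-disjoint system all of whose paths use an edge of `C` has at most `|C|` members. -/
theorem lc_bound [Finite E] (C : Set E) (Ps : Set G.Path) (h : G.EdgeDisjoint Ps)
    (hC : ∀ P ∈ Ps, ∃ e ∈ P.edges, e ∈ C) : Ps.Finite ∧ Ps.ncard ≤ C.ncard := by
  rcases Ps.eq_empty_or_nonempty with rfl | ⟨P₀, hP₀⟩
  · simp
  obtain ⟨e₀, -, -⟩ := hC P₀ hP₀
  have : ∀ P : G.Path, ∃ e : E, P ∈ Ps → e ∈ P.edges ∧ e ∈ C := by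
    intro P
    by_cases hP : P ∈ Ps
    · obtain ⟨e, h⟩ := hC P hP
      exact ⟨e, fun _ => h⟩
    · exact ⟨e₀, fun h => (hP h).elim⟩
  choose f hf using this
  have inj : Set.InjOn f Ps := by
    intro P hP Q hQ hPQ
    by_contra hne
    exact h hP hQ hne _ (hf P hP).1 (hPQ ▸ (hf Q hQ).1)
  have maps : Set.MapsTo f Ps C := fun P hP => (hf P hP).2
  exact ⟨Set.Finite.of_injOn maps inj (Set.toFinite C),
    Set.ncard_le_ncard_of_injOn f maps inj (Set.toFinite C)⟩

theorem lc_extract (F : Finset E) (T' : Set V) {a t : V} (h : lcConn G.I F a t) (ht : t ∈ T') :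
    ∃ vs es, G.IsWalk vs es ∧ vs.Nodup ∧ vs.head? = some a ∧ (∃ b ∈ T', vs.getLast? = some b) ∧
      (∀ e ∈ es, e ∈ F) ∧ ∀ x ∈ vs.dropLast, x ∉ T' := by
  unfold lcConn at h
  induction h using Relation.ReflTransGen.head_induction_on with
  | refl => exact ⟨[t], [], IsWalk.nil t, by simp, rfl, ⟨t, ht, rfl⟩, by simp, by simp⟩
  | @head a a' haa' _ ih =>
    by_cases haT : a ∈ T'
    · exact ⟨[a], [], IsWalk.nil a, by simp, rfl, ⟨a, haT, rfl⟩, by simp, by simp⟩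
    obtain ⟨vs, es, h1, h2, h3, ⟨b, hb, h4⟩, h5, h6⟩ := ih
    by_cases hav : a ∈ vs
    · obtain ⟨l₁, l₂, rfl⟩ := List.append_of_mem hav
      obtain ⟨es₂, k1, k2⟩ := lc_walk_suffix h1
      refine ⟨a :: l₂, es₂, k1, h2.of_append_right, rfl, ⟨b, hb, ?_⟩, fun e he => h5 e (k2 e he), ?_⟩
      · simpa [List.getLast?_append] using h4
      · intro x hx
        apply h6 x
        rw [List.dropLast_append_of_ne_nil (by simp)]
        exact List.mem_append_right _ hx
    · obtain ⟨e, he, hI⟩ := haa'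
      cases vs with
      | nil => simp at h3
      | cons y vs =>
        simp at h3
        subst h3
        refine ⟨a :: y :: vs, e :: es, IsWalk.cons hI h1, List.nodup_cons.2 ⟨hav, h2⟩, rfl,
          ⟨b, hb, by simpa using h4⟩, ?_, ?_⟩
        · intro e' he'
          rcases List.mem_cons.1 he' with rfl | h
          · exact he
          · exact h5 _ h
        · intro x hx
          rw [List.dropLast_cons_cons] at hx
          rcases List.mem_cons.1 hx with rfl | h
          · exact haT
          · exact h6 x h

theorem lc_extract_path (F : Finset E) {s t : V} (hs : s ∈ G.T) (ht : t ∈ G.T) (hst : s ≠ t)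
    (h : lcConn G.I F s t) : ∃ P : G.Path, G.IsTPath P ∧ ∀ e ∈ P.edges, e ∈ F := by
  obtain ⟨vs, es, h1, h2, h3, ⟨b, hb, h4⟩, h5, h6⟩ :=
    lc_extract F (G.T \ {s}) h ⟨ht, fun h => hst h.symm⟩
  refine ⟨⟨s, b, vs, es, h1, h2, h3, h4⟩, ⟨hs, hb.1, fun h => hb.2 h.symm, ?_⟩, h5⟩
  intro x hx hxT
  unfold Path.inner at hx
  simp only [List.drop_one] at hx
  cases vs with
  | nil => simp at h3
  | cons y vs =>
    simp at h3
    subst h3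
    simp only [List.tail_cons] at hx
    have hxs : x ≠ y := by
      rintro rfl
      exact (List.nodup_cons.1 h2).1 (List.mem_of_mem_dropLast hx)
    refine h6 x ?_ ⟨hxT, hxs⟩
    cases vs with
    | nil => simp at hx
    | cons z vs =>
      rw [List.dropLast_cons_cons]
      exact List.mem_cons_of_mem _ hx

theorem lc_cut_eq [Fintype E] (X : Set V) :
    lcD Finset.univ G.I X = ((G.edgeCut X).ncard : ℤ) := by
  classical
  unfold lcD lcCr edgeCut
  rw [Finset.sum_boole, Set.ncard_eq_toFinset_card']
  congr 2
  ext e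
  simp

theorem lc_lambda_le [Finite E] {t : V} (X : Set V) (hX : lcTS G.T t X) (ht : t ∈ G.T) :
    G.lambda {t} (G.T \ {t}) ≤ (G.edgeCut X).ncard := by
  unfold lambda
  apply csSup_le'
  rintro n ⟨Ps, h1, h2, h3, rfl⟩
  refine (lc_bound _ Ps h1 fun P hP => ?_).2
  obtain ⟨k1, k2, _⟩ := h2 P hP
  refine lc_path_cross P X ?_ ?_
  · rw [Set.mem_singleton_iff.1 k1]; exact (hX t ht).2 rfl
  · exact fun h => k2.2 ((hX _ k2.1).1 h)

theorem lc_le_lambda [Finite E] {t : V} (Ps : Set G.Path) (h : G.EdgeDisjoint Ps)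
    (h2 : ∀ P ∈ Ps, G.IsABPath {t} (G.T \ {t}) P) : Ps.ncard ≤ G.lambda {t} (G.T \ {t}) := by
  have key : ∀ Qs : Set G.Path, G.EdgeDisjoint Qs → (∀ P ∈ Qs, G.IsABPath {t} (G.T \ {t}) P) →
      Qs.Finite ∧ Qs.ncard ≤ (Set.univ : Set E).ncard := by
    intro Qs q1 q2
    refine lc_bound _ Qs q1 fun P hP => ?_
    obtain ⟨k1, k2, _⟩ := q2 P hP
    obtain ⟨e, he⟩ := lc_edges_ne P (fun h => k2.2 (h ▸ k1))
    exact ⟨e, he, trivial⟩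
  refine le_csSup ⟨(Set.univ : Set E).ncard, ?_⟩ ⟨Ps, h, h2, (key Ps h h2).1, rfl⟩
  rintro n ⟨Qs, q1, q2, q3, rfl⟩
  exact (key Qs q1 q2).2

theorem lc_tsystem [Finite E] (Ps : Set G.Path) (h : G.IsTPathSystem Ps) :
    Ps.Finite ∧ Ps.ncard ≤ (Set.univ : Set E).ncard := by
  refine lc_bound _ Ps h.1 fun P hP => ?_
  obtain ⟨e, he⟩ := lc_edges_ne P (h.2 P hP).2.2.1
  exact ⟨e, he, trivial⟩

theorem lc_upper_one [Finite E] (Ps : Set G.Path) (h : G.IsTPathSystem Ps) (t : V) :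
    {P ∈ Ps | P.first = t}.ncard + {P ∈ Ps | P.last = t}.ncard ≤ G.lambda {t} (G.T \ {t}) := by
  have hfin := (lc_tsystem Ps h).1
  have inj : Function.Injective (lcRev (G := G)) := fun P Q hPQ => by
    rw [← lcRev_rev P, hPQ, lcRev_rev]
  have rev_e : ∀ (P : G.Path) e, e ∈ (lcRev P).edges ↔ e ∈ P.edges := fun P e => by
    simp [lcRev]
  rw [← Set.ncard_image_of_injective {P ∈ Ps | P.last = t} inj,
    ← Set.ncard_union_eq ?_ (hfin.subset (fun P hP => hP.1))
      ((hfin.subset (fun P hP => hP.1)).image _)]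
  · apply lc_le_lambda
    · have aux : ∀ P ∈ Ps, ∀ Q ∈ Ps, P ≠ Q → ∀ e, e ∈ P.edges → e ∉ Q.edges :=
        fun P hP Q hQ hne => h.1 hP hQ hne
      rintro P (⟨hP, hPt⟩ | ⟨P, ⟨hP, hPt⟩, rfl⟩) Q (⟨hQ, hQt⟩ | ⟨Q, ⟨hQ, hQt⟩, rfl⟩) hne e
      · exact aux P hP Q hQ hne e
      · rw [rev_e]
        refine aux P hP Q hQ ?_ e
        rintro rfl
        exact (h.2 P hP).2.2.1 (hPt.trans hQt.symm)
      · rw [rev_e]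
        refine aux P hP Q hQ ?_ e
        rintro rfl
        exact (h.2 P hP).2.2.1 (hQt.trans hPt.symm)
      · rw [rev_e, rev_e]
        exact aux P hP Q hQ (fun h => hne (by rw [h])) e
    · rintro P (⟨hP, hPt⟩ | ⟨P, ⟨hP, hPt⟩, rfl⟩)
      · obtain ⟨k1, k2, k3, k4⟩ := h.2 P hP
        refine ⟨hPt, ⟨k2, fun h => k3 (hPt.trans h.symm)⟩, fun v hv hv' => k4 v hv ?_⟩
        rcases hv' with h | h
        · rw [Set.mem_singleton_iff.1 h, ← hPt]; exact k1
        · exact h.1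
      · obtain ⟨k1, k2, k3, k4⟩ := h.2 P hP
        refine ⟨hPt, ⟨k1, fun h => k3 (Eq.trans h hPt.symm)⟩, fun v hv hv' =>
          k4 v ((lcRev_inner P v).1 hv) ?_⟩
        rcases hv' with h | h
        · rw [Set.mem_singleton_iff.1 h, ← hPt]; exact k2
        · exact h.1
  · rw [Set.disjoint_left]
    rintro P ⟨hP, hPt⟩ ⟨Q, ⟨hQ, hQt⟩, rfl⟩
    obtain ⟨e, he⟩ := lc_edges_ne Q (h.2 Q hQ).2.2.1
    refine h.1 hP hQ ?_ e ((rev_e Q e).2 he) he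
    intro hh
    refine (h.2 Q hQ).2.2.1 ?_
    have : (lcRev Q).first = Q.first := by rw [hh]
    exact this.symm

theorem lc_upper [Finite V] [Finite E] (Ps : Set G.Path) (h : G.IsTPathSystem Ps) :
    2 * Ps.ncard ≤ ∑ t ∈ (Set.toFinite G.T).toFinset, G.lambda {t} (G.T \ {t}) := by
  classical
  refine le_trans (le_of_eq ?_) (Finset.sum_le_sum fun t _ => lc_upper_one Ps h t)
  have hfin := (lc_tsystem Ps h).1
  rw [Finset.sum_add_distrib, two_mul]
  have aux : ∀ f : G.Path → V, (∀ P ∈ Ps, f P ∈ G.T) →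
      Ps.ncard = ∑ t ∈ (Set.toFinite G.T).toFinset, {P ∈ Ps | f P = t}.ncard := by
    intro f hf
    rw [Set.ncard_eq_toFinset_card Ps hfin, Finset.card_eq_sum_card_fiberwise (f := f)
      (t := (Set.toFinite G.T).toFinset)]
    · refine Finset.sum_congr rfl fun t _ => ?_
      rw [← Set.ncard_coe_finset]
      congr 1
      ext P; simp
    · intro P hP
      simpa using hf P (by simpa using hP)
  rw [← aux _ fun P hP => (h.2 P hP).1, ← aux _ fun P hP => (h.2 P hP).2.1]

theorem lc_lower [Finite V] [Finite E] (hG : G.InnerEulerian) :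
    ∃ Ps : Set G.Path, G.IsTPathSystem Ps ∧
      ∑ t ∈ (Set.toFinite G.T).toFinset, G.lambda {t} (G.T \ {t}) ≤ 2 * Ps.ncard := by
  classical
  have := Fintype.ofFinite E
  have heven : ∀ X : Set V, Disjoint X G.T → Even (lcD Finset.univ G.I X) := by
    intro X hX
    have := hG X hX
    rw [lc_cut_eq, Int.even_coe_nat, ← Nat.not_odd_iff_even]
    exact fun h => this ⟨Set.toFinite _, h⟩
  -- minimum cuts
  have hmin : ∀ t : V, ∃ X, lcTS G.T t X ∧ ∀ Y, lcTS G.T t Y →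
      lcD Finset.univ G.I X ≤ lcD Finset.univ G.I Y := by
    intro t
    obtain ⟨X, h1, h2⟩ := Set.exists_min_image {X | lcTS G.T t X} (lcD Finset.univ G.I)
      (Set.toFinite _) ⟨{t}, fun r _ => by simp⟩
    exact ⟨X, h1, h2⟩
  choose M hM1 hM2 using hmin
  obtain ⟨k, f, h1, h2, h3, h4⟩ := lc_main (Set.toFinite G.T).toFinset _ Finset.univ G.I
    (fun t => lcD Finset.univ G.I (M t)) rfl
    (by
      intro t ht X hX
      rw [Set.Finite.coe_toFinset] at hX
      refine ⟨hM2 t X hX, ?_⟩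
      have k := lcD_symm Finset.univ G.I X (M t)
      have k2 := heven ((X \ M t) ∪ (M t \ X)) (by
        rw [Set.disjoint_left]
        intro r hr hrT
        have := hX r hrT
        have := hM1 t r hrT
        simp only [Set.mem_union, Set.mem_sdiff] at hr
        tauto)
      rw [Int.even_add] at k
      rw [Int.even_sub]
      have := k.2 k2
      rwa [Int.even_add] at this)
    (by
      intro v hv
      refine heven _ ?_
      rw [Set.disjoint_singleton_left]
      simpa using hv)
  have hex : ∀ i, ∃ P : G.Path, G.IsTPath P ∧ ∀ e ∈ P.edges, e ∈ f i := by
    intro i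
    obtain ⟨s, hs, t, ht, hst, hc⟩ := h3 i
    exact lc_extract_path (f i) (by simpa using hs) (by simpa using ht) hst hc
  choose p hp1 hp2 using hex
  have dis : ∀ i j, i ≠ j → ∀ e, e ∈ (p i).edges → e ∉ (p j).edges := fun i j hij e he he' =>
    Finset.disjoint_left.1 (h2 hij) (hp2 i e he) (hp2 j e he')
  have inj : Function.Injective p := by
    intro i j hij
    by_contra hne
    obtain ⟨e, he⟩ := lc_edges_ne (p i) (hp1 i).2.2.1
    exact dis i j hne e he (hij ▸ he)
  refine ⟨Set.range p, ⟨?_, ?_⟩, ?_⟩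
  · rintro _ ⟨i, rfl⟩ _ ⟨j, rfl⟩ hne
    exact dis i j (fun h => hne (by rw [h]))
  · rintro _ ⟨i, rfl⟩
    exact hp1 i
  · have hk : (Set.range p).ncard = k := by
      rw [← Set.image_univ, Set.ncard_image_of_injective _ inj, Set.ncard_univ, Nat.card_fin]
    rw [hk]
    zify
    refine le_trans (Finset.sum_le_sum fun t ht => ?_) h4
    rw [lc_cut_eq]
    exact_mod_cast lc_lambda_le (M t) (hM1 t) (by simpa using ht)

end Grapht

/-- **Lovász–Cherkassky theorem (finite case).** In a finite inner Eulerian grapht the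
maximal number of pairwise edge-disjoint `T`-paths equals `(1/2) · Σ_{t∈T} λ_G(t, T−t)`. -/
theorem lovasz_cherkassky_finite {V : Type u} {E : Type v} [Finite V] [Finite E]
    (G : Grapht V E) (hG : G.InnerEulerian) :
    2 * sSup {n : ℕ | ∃ Ps : Set G.Path, G.IsTPathSystem Ps ∧ Ps.Finite ∧ Ps.ncard = n} =
      ∑ t ∈ (Set.toFinite G.T).toFinset, G.lambda {t} (G.T \ {t}) := by
  obtain ⟨Ps, h1, h2⟩ := Grapht.lc_lower hG
  apply le_antisymm
  · have hne : {n : ℕ | ∃ Ps : Set G.Path, G.IsTPathSystem Ps ∧ Ps.Finite ∧ Ps.ncard = n}.Nonempty :=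
      ⟨_, Ps, h1, (Grapht.lc_tsystem Ps h1).1, rfl⟩
    obtain ⟨Qs, q1, _, q3⟩ := Nat.sSup_mem hne ⟨(Set.univ : Set E).ncard, by
      rintro n ⟨Qs, q1, q2, rfl⟩
      exact (Grapht.lc_tsystem Qs q1).2⟩
    rw [← q3]
    exact Grapht.lc_upper Qs q1
  · refine h2.trans (Nat.mul_le_mul_left 2 (le_csSup ⟨(Set.univ : Set E).ncard, ?_⟩
      ⟨Ps, h1, (Grapht.lc_tsystem Ps h1).1, rfl⟩))
    rintro n ⟨Qs, q1, q2, rfl⟩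
    exact (Grapht.lc_tsystem Qs q1).2
end

section
/- A grapht G=(V,E,I,T) admits an edge-partition into cycles and T-paths if and only if G is inner Eulerian. -/
/-! Common definitions: graphts (multigraphs with terminals), walks, paths, cycles,
edge cuts, inner Eulerian graphts, path systems, linkages, Erdős–Menger cuts,
restriction (edge deletion) and contraction. -/

universe u v

def gcut {W : Type u} {E : Type v} (J : E → Sym2 W) (X : Set W) : Set E :=
  {e | ∃ u w, J e = s(u, w) ∧ u ∈ X ∧ w ∉ X}

def GEv {W : Type u} {E : Type v} (J : E → Sym2 W) (F : Set E) : Prop :=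
  ∀ X : Set W, (gcut J X ∩ F).Finite → Even (gcut J X ∩ F).ncard

def gverts {W : Type u} {E : Type v} (J : E → Sym2 W) (F : Set E) : Set W :=
  {x | ∃ e ∈ F, x ∈ J e}

def GConn {W : Type u} {E : Type v} (J : E → Sym2 W) (F : Set E) : W → W → Prop :=
  Relation.ReflTransGen (fun x y => ∃ e ∈ F, J e = s(x, y))

section
variable {W : Type u} {E : Type v} {J : E → Sym2 W}

lemma mem_gcut {X : Set W} {e : E} {a b : W} (h : J e = s(a, b)) :
    e ∈ gcut J X ↔ ¬ (a ∈ X ↔ b ∈ X) := by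
  constructor
  · rintro ⟨u, w, h1, hu, hw⟩
    rw [h, Sym2.eq_iff] at h1
    rcases h1 with ⟨rfl, rfl⟩ | ⟨rfl, rfl⟩ <;> tauto
  · intro h1
    by_cases ha : a ∈ X
    · exact ⟨a, b, h, ha, by tauto⟩
    · exact ⟨b, a, by rw [h, Sym2.eq_swap], by tauto, ha⟩

lemma GConn.symm {F : Set E} {x y : W} (h : GConn J F x y) : GConn J F y x := by
  induction h with
  | refl => exact Relation.ReflTransGen.refl
  | @tail b c _ hbc ih =>
    obtain ⟨e, he, h⟩ := hbc
    exact Relation.ReflTransGen.head ⟨e, he, by rw [h, Sym2.eq_swap]⟩ ih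

lemma GConn.mono {F F' : Set E} (hF : F ⊆ F') {x y : W} (h : GConn J F x y) :
    GConn J F' x y := by
  induction h with
  | refl => exact Relation.ReflTransGen.refl
  | tail _ hbc ih =>
    obtain ⟨e, he, h⟩ := hbc
    exact Relation.ReflTransGen.tail ih ⟨e, hF he, h⟩

lemma GConn.edge {F : Set E} {e : E} (he : e ∈ F) {x y : W} (h : J e = s(x, y)) :
    GConn J F x y := Relation.ReflTransGen.single ⟨e, he, h⟩

lemma GConn.cut {F : Set E} {x y : W} (h : GConn J F x y) {X : Set W} (hx : x ∈ X)
    (hy : y ∉ X) : ∃ e ∈ F, e ∈ gcut J X := by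
  induction h with
  | refl => exact absurd hx hy
  | @tail b c _ hbc ih =>
    by_cases hb : b ∈ X
    · obtain ⟨e, he, h⟩ := hbc
      exact ⟨e, he, b, c, h, hb, hy⟩
    · exact ih hb

lemma GConn.finite {F : Set E} {x y : W} (h : GConn J F x y) :
    ∃ D : Set E, D.Finite ∧ D ⊆ F ∧ GConn J D x y := by
  induction h with
  | refl => exact ⟨∅, Set.finite_empty, Set.empty_subset _, Relation.ReflTransGen.refl⟩
  | @tail b c _ hbc ih =>
    obtain ⟨D, hD, hDF, hc⟩ := ih
    obtain ⟨e, he, h⟩ := hbc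
    refine ⟨insert e D, hD.insert e, Set.insert_subset he hDF, ?_⟩
    exact (hc.mono (Set.subset_insert _ _)).tail ⟨e, Set.mem_insert _ _, h⟩

/-- removing a suitably closed set of edges keeps evenness -/
lemma gev_compl {U : Set E} (hE : GEv J Set.univ)
    (hU : ∀ X : Set W, (gcut J X \ U).Finite → ∀ x ∈ gverts J U, ∀ y ∈ gverts J U,
      x ∈ X → y ∉ X → ¬ GConn J Uᶜ x y) : GEv J Uᶜ := by
  intro X hX
  have key := hU X hX
  let X' : Set W := {v | ¬ ((v ∈ X) ↔ ∃ x ∈ gverts J U, x ∈ X ∧ GConn J Uᶜ v x)}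
  have h0 : ∀ v ∈ gverts J U, v ∉ X' := by
    intro v hv
    simp only [X', Set.mem_ofPred_eq, not_not]
    constructor
    · intro h
      exact ⟨v, hv, h, Relation.ReflTransGen.refl⟩
    · rintro ⟨x, hx, hxX, hc⟩
      by_contra h
      exact key x hx v hv hxX h hc.symm
  have h1 : gcut J X' ∩ Set.univ = gcut J X ∩ Uᶜ := by
    ext e
    obtain ⟨a, b, hab⟩ : ∃ a b, J e = s(a, b) := by
      induction h : J e with | _ a b => exact ⟨a, b, rfl⟩
    simp only [Set.mem_inter_iff, Set.mem_univ, and_true, mem_gcut hab]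
    by_cases he : e ∈ U
    · have ha : a ∉ X' := h0 a ⟨e, he, by simp [hab]⟩
      have hb : b ∉ X' := h0 b ⟨e, he, by simp [hab]⟩
      simp [ha, hb, he]
    · have hc : GConn J Uᶜ a b := GConn.edge he hab
      have : (∃ x ∈ gverts J U, x ∈ X ∧ GConn J Uᶜ a x) ↔
          (∃ x ∈ gverts J U, x ∈ X ∧ GConn J Uᶜ b x) := by
        constructor
        · rintro ⟨x, h1, h2, h3⟩
          exact ⟨x, h1, h2, hc.symm.trans h3⟩
        · rintro ⟨x, h1, h2, h3⟩
          exact ⟨x, h1, h2, hc.trans h3⟩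
      simp only [X', Set.mem_ofPred_eq, this, Set.mem_compl_iff, he, not_false_eq_true, and_true]
      by_cases h1 : a ∈ X <;> by_cases h2 : b ∈ X <;>
        by_cases h3 : (∃ x ∈ gverts J U, x ∈ X ∧ GConn J Uᶜ b x) <;>
        simp only [h1, h2, h3, not_true_eq_false, not_false_eq_true, iff_self, iff_true, iff_false]
  rw [← h1]
  apply hE
  rw [h1]; exact hX

/-- a reflecting subset of an even set is even -/
lemma gev_piece {U S : Set E} (hE : GEv J Uᶜ)
    (hS : ∀ C : Set E, C.Finite → C ⊆ S → ∀ x ∈ gverts J S, ∀ y ∈ gverts J S,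
      GConn J (Uᶜ \ C) x y → GConn J ((S \ U) \ C) x y) : GEv J (S \ U) := by
  intro X hX
  set C := gcut J X ∩ (S \ U) with hC
  have hCS : C ⊆ S := fun e he => he.2.1
  let Y : Set W := {v | ∃ x ∈ gverts J S, x ∈ X ∧ GConn J (Uᶜ \ C) v x}
  have h1 : gcut J Y ∩ Uᶜ = C := by
    ext e
    constructor
    · rintro ⟨⟨u, w, h, ⟨x, hx, hxX, hc⟩, hw⟩, heU⟩
      by_contra heC
      have heF : e ∈ Uᶜ \ C := ⟨heU, heC⟩
      exact hw ⟨x, hx, hxX, (GConn.edge heF h).symm.trans hc⟩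
    · intro he
      obtain ⟨⟨u, w, h, hu, hw⟩, heS, heU⟩ := id he
      refine ⟨⟨u, w, h, ⟨u, ⟨e, heS, by simp [h]⟩, hu, Relation.ReflTransGen.refl⟩, ?_⟩, heU⟩
      rintro ⟨x, hx, hxX, hc⟩
      obtain ⟨f, hf, hfX⟩ :=
        (hS C hX hCS w ⟨e, heS, by simp [h]⟩ x hx hc).symm.cut hxX hw
      exact hf.2 ⟨hfX, hf.1⟩
  rw [← h1]
  apply hE
  rw [h1]; exact hX

end

open Cardinal in
lemma exists_closure {E : Type v} (μ : Cardinal.{v}) (hμ : ℵ₀ ≤ μ) (φ : Finset E → Set E)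
    (hφ : ∀ s, #(φ s) ≤ μ) (S₀ : Set E) (h0 : #S₀ ≤ μ) :
    ∃ S : Set E, S₀ ⊆ S ∧ #S ≤ μ ∧ ∀ s : Finset E, (s : Set E) ⊆ S → φ s ⊆ S := by
  classical
  let step : Set E → Set E := fun S =>
    S ∪ ⋃ t : Finset S, φ (t.map (Function.Embedding.subtype _))
  let Sn : ℕ → Set E := fun n => step^[n] S₀
  have hsucc : ∀ n, Sn (n+1) = step (Sn n) := fun n => Function.iterate_succ_apply' _ _ _
  have hmono : Monotone Sn := monotone_nat_of_le_succ (fun n => by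
    rw [hsucc]; exact Set.subset_union_left)
  have hstep : ∀ S : Set E, #S ≤ μ → #(step S) ≤ μ := by
    intro S hS
    refine (mk_union_le _ _).trans (add_le_of_le hμ hS ?_)
    refine (mk_iUnion_le _).trans (mul_le_of_le hμ ?_ (ciSup_le' fun t => hφ _))
    rcases finite_or_infinite S with h | h
    · exact (Cardinal.mk_le_aleph0 (α := Finset S)).trans hμ
    · rw [mk_finset_of_infinite]; exact hS
  have hcard : ∀ n, #(Sn n) ≤ μ := by
    intro n
    induction n with
    | zero => exact h0
    | succ n ih => rw [hsucc]; exact hstep _ ih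
  refine ⟨⋃ n : ULift.{v} ℕ, Sn n.down, ?_, ?_, ?_⟩
  · exact Set.subset_iUnion (fun n : ULift.{v} ℕ => Sn n.down) ⟨0⟩
  · refine (mk_iUnion_le _).trans (mul_le_of_le hμ ?_ (ciSup_le' fun t => hcard _))
    exact (Cardinal.mk_le_aleph0).trans hμ
  · intro s hs
    have : ∃ n, (s : Set E) ⊆ Sn n := by
      induction s using Finset.induction_on with
      | empty => exact ⟨0, by simp⟩
      | insert a s ha ih =>
        rw [Finset.coe_insert, Set.insert_subset_iff] at hs
        obtain ⟨n, hn⟩ := ih hs.2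
        obtain ⟨m, hm⟩ := Set.mem_iUnion.1 hs.1
        refine ⟨max n m.down, ?_⟩
        rw [Finset.coe_insert, Set.insert_subset_iff]
        exact ⟨hmono (le_max_right _ _) hm, hn.trans (hmono (le_max_left _ _))⟩
    obtain ⟨n, hn⟩ := this
    have h1 : φ s ⊆ Sn (n+1) := by
      rw [hsucc]
      refine Set.subset_union_of_subset_right ?_ _
      have : s = (s.subtype (· ∈ Sn n)).map (Function.Embedding.subtype _) := by
        rw [Finset.subtype_map, Finset.filter_true_of_mem]
        intro x hx; exact hn hx
      rw [this]
      exact Set.subset_iUnion (fun t : Finset (Sn n) => φ (t.map (Function.Embedding.subtype _))) _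
    exact h1.trans (Set.subset_iUnion (fun n : ULift.{v} ℕ => Sn n.down) ⟨n+1⟩)

open Cardinal in
lemma exists_wo (E : Type v) : ∃ (_ : LinearOrder E) (_ : WellFoundedLT E),
    (∀ a : E, #(Set.Iio a) < #E) ∧
    ∀ c : Set E, ∃ g : c → E, Function.Injective g ∧
      ∀ a : E, #c ≤ #(Set.Iio a) → ∀ h, g h < a := by
  classical
  obtain ⟨r, hr, hE⟩ := Cardinal.exists_ord_eq E
  refine ⟨linearOrderOfSTO r, ⟨hr.wf⟩, ?_, ?_⟩
  · intro a
    exact Cardinal.card_typein_lt (r := r) a hE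
  · intro c
    obtain ⟨s, hs, hc⟩ := Cardinal.exists_ord_eq c
    have hle : Ordinal.type s ≤ Ordinal.type r := by
      rw [← hc, ← hE]
      exact Cardinal.ord_le_ord.2 (mk_set_le c)
    obtain ⟨f⟩ := Ordinal.type_le_iff.1 hle
    refine ⟨f, f.injective, ?_⟩
    intro a ha h
    change r (f h) a
    rw [← Ordinal.typein_lt_typein r, Ordinal.typein_apply]
    refine (Ordinal.typein_lt_type s h).trans_le ?_
    rw [← hc, Cardinal.ord_le]
    exact ha

open Cardinal in
lemma mk_finite_biUnion_le {ι : Type u} {E : Type v} {μ : Cardinal.{v}} (hμ : ℵ₀ ≤ μ)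
    {s : Set ι} (hs : s.Finite) (A : ι → Set E) (hA : ∀ i ∈ s, #(A i) ≤ μ) :
    #(⋃ i ∈ s, A i : Set E) ≤ μ := by
  induction s, hs using Set.Finite.induction_on with
  | empty => simp
  | @insert a s _ _ ih =>
    rw [Set.biUnion_insert]
    refine (mk_union_le _ _).trans (add_le_of_le hμ (hA a (Set.mem_insert _ _)) ?_)
    exact ih fun i hi => hA i (Set.mem_insert_of_mem _ hi)

lemma sym2_finite {W : Type u} (z : Sym2 W) : {x | x ∈ z}.Finite := by
  induction z with
  | _ a b =>
    refine (Set.toFinite {a, b}).subset ?_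
    intro x hx
    simpa using hx

lemma gverts_finite {W : Type u} {E : Type v} {J : E → Sym2 W} {F : Set E} (hF : F.Finite) :
    (gverts J F).Finite := by
  have : gverts J F = ⋃ e ∈ F, {x | x ∈ J e} := by
    ext x; simp [gverts]
  rw [this]
  exact hF.biUnion fun e _ => sym2_finite _

lemma gverts_mono {W : Type u} {E : Type v} {J : E → Sym2 W} {F F' : Set E} (hF : F ⊆ F') :
    gverts J F ⊆ gverts J F' := fun _ ⟨e, he, h⟩ => ⟨e, hF he, h⟩

open Cardinal in
lemma gstep {W : Type u} {E : Type v} {J : E → Sym2 W} (hE : GEv J Set.univ)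
    (hunc : ℵ₀ < #E) : ∃ P : E → Set E, (∀ a, GEv J (P a)) ∧ (∀ a, #(P a) < #E) ∧
      Pairwise (fun a b => Disjoint (P a) (P b)) ∧ ⋃ a, P a = Set.univ := by
  classical
  obtain ⟨_, _, hIio, hg⟩ := exists_wo E
  choose g hginj hg using hg
  have hcut : ∀ x y : W, ∃ c : Set E, (x ≠ y → ¬ GConn J cᶜ x y) ∧
      ∀ c' : Set E, ¬ GConn J c'ᶜ x y → #c ≤ #c' := by
    intro x y
    by_cases hxy : x = y
    · exact ⟨∅, fun h => absurd hxy h, fun c' _ => by simp⟩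
    · obtain ⟨c, hc, hmin⟩ := WellFounded.has_min
        (InvImage.wf (fun c : Set E => #c) Cardinal.lt_wf) {c | ¬ GConn J cᶜ x y}
        ⟨Set.univ, by
          intro h
          obtain ⟨e, he, _⟩ := h.cut (X := {x}) rfl (fun h => hxy h.symm)
          exact he trivial⟩
      exact ⟨c, fun _ => hc, fun c' hc' => not_lt.1 (hmin c' hc')⟩
  choose cut hcut hmin using hcut
  have hpath : ∀ (U C : Set E) (x y : W), ∃ D : Set E, D.Finite ∧
      (GConn J (Uᶜ \ C) x y → D ⊆ Uᶜ \ C ∧ GConn J D x y) := by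
    intro U C x y
    by_cases h : GConn J (Uᶜ \ C) x y
    · obtain ⟨D, h1, h2, h3⟩ := h.finite
      exact ⟨D, h1, fun _ => ⟨h2, h3⟩⟩
    · exact ⟨∅, Set.finite_empty, fun h' => absurd h' h⟩
  choose path hpfin hpath using hpath
  let μ : E → Cardinal.{v} := fun a => max ℵ₀ #(Set.Iio a)
  have hμ0 : ∀ a, ℵ₀ ≤ μ a := fun a => le_max_left _ _
  have hμlt : ∀ a, μ a < #E := fun a => max_lt hunc (hIio a)
  have hS : ∀ (a : E) (U : Set E), ∃ S : Set E, U ⊆ S ∧ a ∈ S ∧ (#U ≤ μ a → #S ≤ μ a) ∧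
      (∀ x ∈ gverts J S, ∀ y ∈ gverts J S, ∀ (h : E) (hc : h ∈ cut x y),
        ((cut x y).Countable ∨ g (cut x y) ⟨h, hc⟩ ≤ a) → h ∈ S) ∧
      (∀ C : Set E, C.Finite → C ⊆ S → ∀ x ∈ gverts J S, ∀ y ∈ gverts J S,
        GConn J (Uᶜ \ C) x y → GConn J ((S \ U) \ C) x y) := by
    intro a U
    by_cases hU : #U ≤ μ a
    · let Q : W → W → Set E := fun x y =>
        {h | ∃ hc : h ∈ cut x y, (cut x y).Countable ∨ g (cut x y) ⟨h, hc⟩ ≤ a}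
      have hQ : ∀ x y, #(Q x y) ≤ μ a := by
        intro x y
        by_cases hc : (cut x y).Countable
        · have h1 : Q x y ⊆ cut x y := fun h hh => hh.1
          exact (mk_le_mk_of_subset h1).trans ((le_aleph0_iff_set_countable.2 hc).trans (hμ0 a))
        · have h1 : #(Q x y) ≤ #(Set.Iic a) := by
            refine mk_le_of_injective (f := fun h : Q x y =>
              (⟨g (cut x y) ⟨h.1, h.2.1⟩, h.2.2.resolve_left hc⟩ : Set.Iic a)) ?_
            intro h h' hh
            have h3 := hginj _ (Subtype.ext_iff.1 hh)
            have h4 : h.1 = h'.1 := by simpa using h3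
            exact Subtype.ext h4
          refine h1.trans ?_
          rw [← Set.Iio_insert]
          refine (mk_insert_le).trans (add_le_of_le (hμ0 a) (le_max_right _ _) ?_)
          exact one_le_aleph0.trans (hμ0 a)
      let φ : Finset E → Set E := fun s =>
        ⋃ x ∈ gverts J (s : Set E), ⋃ y ∈ gverts J (s : Set E),
          (Q x y ∪ ⋃ C ∈ (s.powerset : Set (Finset E)), path U (C : Set E) x y)
      have hφ : ∀ s, #(φ s) ≤ μ a := by
        intro s
        refine mk_finite_biUnion_le (hμ0 a) (gverts_finite s.finite_toSet) _ fun x _ => ?_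
        refine mk_finite_biUnion_le (hμ0 a) (gverts_finite s.finite_toSet) _ fun y _ => ?_
        refine (mk_union_le _ _).trans (add_le_of_le (hμ0 a) (hQ x y) ?_)
        refine mk_finite_biUnion_le (hμ0 a) (Finset.finite_toSet _) _ fun C _ => ?_
        exact (le_aleph0_iff_set_countable.2 (hpfin _ _ _ _).countable).trans (hμ0 a)
      obtain ⟨S, hS0, hScard, hScl⟩ := exists_closure (μ a) (hμ0 a) φ hφ (insert a U)
        ((mk_insert_le).trans (add_le_of_le (hμ0 a) hU (one_le_aleph0.trans (hμ0 a))))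
      refine ⟨S, (Set.subset_insert _ _).trans hS0, hS0 (Set.mem_insert _ _),
        fun _ => hScard, ?_, ?_⟩
      · rintro x ⟨e, he, hx⟩ y ⟨e', he', hy⟩ h hc hh
        refine hScl {e, e'} ?_ ?_
        · intro z hz
          simp only [Finset.coe_insert, Finset.coe_singleton, Set.mem_insert_iff,
            Set.mem_singleton_iff] at hz
          rcases hz with rfl | rfl <;> assumption
        · refine Set.mem_biUnion (x := x) ⟨e, by simp, hx⟩ ?_
          refine Set.mem_biUnion (x := y) ⟨e', by simp, hy⟩ ?_
          exact Or.inl ⟨hc, hh⟩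
      · rintro C hC hCS x ⟨e, he, hx⟩ y ⟨e', he', hy⟩ hconn
        obtain ⟨h1, h2⟩ := hpath U C x y hconn
        have h3 : path U C x y ⊆ S := by
          refine Set.Subset.trans ?_ (hScl (insert e (insert e' hC.toFinset)) ?_)
          · intro z hz
            refine Set.mem_biUnion (x := x) ⟨e, by simp, hx⟩ ?_
            refine Set.mem_biUnion (x := y) ⟨e', by simp, hy⟩ ?_
            refine Or.inr (Set.mem_biUnion (x := hC.toFinset) ?_ ?_)
            · simp only [Finset.coe_powerset, Set.mem_preimage, Set.mem_powerset_iff]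
              intro w hw
              simp only [Finset.coe_insert, Set.mem_insert_iff]
              exact Or.inr (Or.inr hw)
            · simpa using hz
          · intro z hz
            simp only [Finset.coe_insert, Set.Finite.coe_toFinset, Set.mem_insert_iff] at hz
            rcases hz with rfl | rfl | hz
            · assumption
            · assumption
            · exact hCS hz
        have h4 : path U C x y ⊆ (S \ U) \ C := fun z hz => ⟨⟨h3 hz, (h1 hz).1⟩, (h1 hz).2⟩
        exact h2.mono h4
    · refine ⟨Set.univ, Set.subset_univ _, trivial, fun h => absurd h hU,
        fun _ _ _ _ _ _ _ => trivial, ?_⟩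
      intro C _ _ x _ y _ h
      have h4 : Uᶜ \ C ⊆ (Set.univ \ U) \ C := fun z hz => ⟨⟨trivial, hz.1⟩, hz.2⟩
      exact h.mono h4
  choose S hSU hSa hScard hS1 hS2 using hS
  obtain ⟨f, hf⟩ : ∃ f : E → Set E, ∀ a, f a = S a (⋃ b ∈ Set.Iio a, f b) := by
    refine ⟨WellFounded.fix (wellFounded_lt (α := E))
      (fun a F => S a (⋃ b : Set.Iio a, F b.1 b.2)), fun a => ?_⟩
    rw [WellFounded.fix_eq, Set.biUnion_eq_iUnion]
  set U : E → Set E := fun a => ⋃ b ∈ Set.Iio a, f b with hUdef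
  have hfU : ∀ a, f a = S a (U a) := hf
  have hUf : ∀ a, U a ⊆ f a := fun a => by rw [hfU]; exact hSU _ _
  have hlt : ∀ {a b}, a < b → f a ⊆ U b := fun {a b} h =>
    Set.subset_biUnion_of_mem (u := fun b => f b) (Set.mem_Iio.2 h)
  have hmono : ∀ {a b}, a ≤ b → f a ⊆ f b := by
    intro a b h
    rcases h.eq_or_lt with rfl | h
    · exact subset_rfl
    · exact (hlt h).trans (hUf b)
  have hμmono : ∀ {a b}, a ≤ b → μ a ≤ μ b := fun {a b} h =>
    max_le_max le_rfl (mk_le_mk_of_subset (Set.Iio_subset_Iio h))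
  have hUcard' : ∀ a, (∀ b < a, #(f b) ≤ μ b) → #(U a) ≤ μ a := by
    intro a ih
    refine (mk_biUnion_le _ _).trans (mul_le_of_le (hμ0 a) (le_max_right _ _) ?_)
    exact ciSup_le' fun b => (ih b.1 b.2).trans (hμmono (le_of_lt b.2))
  have hfcard : ∀ a, #(f a) ≤ μ a := by
    intro a
    induction a using WellFoundedLT.induction with
    | _ a ih =>
      rw [hfU]
      exact hScard _ _ (hUcard' a ih)
  have hUcard : ∀ a, #(U a) ≤ μ a := fun a => hUcard' a fun b _ => hfcard b
  have hUev : ∀ a, GEv J (U a)ᶜ := by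
    intro a
    refine gev_compl hE ?_
    rintro X hX x ⟨e, he, hx⟩ y ⟨e', he', hy⟩ hxX hyX hconn
    have hsep : ¬ GConn J (gcut J X)ᶜ x y := by
      intro h
      obtain ⟨z, hz, hz'⟩ := h.cut hxX hyX
      exact hz hz'
    have hcle : #(cut x y) ≤ μ a := by
      refine (hmin x y _ hsep).trans ?_
      have : gcut J X ⊆ U a ∪ (gcut J X \ U a) := by
        intro z hz
        by_cases h : z ∈ U a
        · exact Or.inl h
        · exact Or.inr ⟨hz, h⟩
      refine (mk_le_mk_of_subset this).trans ((mk_union_le _ _).trans ?_)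
      exact add_le_of_le (hμ0 a) (hUcard a)
        ((le_aleph0_iff_set_countable.2 hX.countable).trans (hμ0 a))
    have hsub : cut x y ⊆ U a := by
      intro h hc
      obtain ⟨b, hb, heb⟩ := Set.mem_iUnion₂.1 he
      obtain ⟨b', hb', heb'⟩ := Set.mem_iUnion₂.1 he'
      have main : ∀ m, m < a → b ≤ m → b' ≤ m →
          ((cut x y).Countable ∨ g (cut x y) ⟨h, hc⟩ ≤ m) → h ∈ U a := by
        intro m hma hbm hbm' hor
        refine hlt hma ?_
        rw [hfU]
        refine hS1 m (U m) x ⟨e, ?_, hx⟩ y ⟨e', ?_, hy⟩ h hc hor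
        · rw [← hfU]; exact hmono hbm heb
        · rw [← hfU]; exact hmono hbm' heb'
      by_cases hcc : (cut x y).Countable
      · exact main (max b b') (max_lt hb hb') (le_max_left _ _) (le_max_right _ _) (Or.inl hcc)
      · have h1 : #(cut x y) ≤ #(Set.Iio a) := by
          rcases le_max_iff.1 hcle with h2 | h2
          · exact absurd (le_aleph0_iff_set_countable.1 h2) hcc
          · exact h2
        have h2 := hg _ a h1 ⟨h, hc⟩
        exact main (max (max b b') (g (cut x y) ⟨h, hc⟩)) (max_lt (max_lt hb hb') h2)
          ((le_max_left _ _).trans (le_max_left _ _)) ((le_max_right _ _).trans (le_max_left _ _))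
          (Or.inr (le_max_right _ _))
    exact hcut x y (fun h => hyX (h ▸ hxX)) (hconn.mono (Set.compl_subset_compl.2 hsub))
  refine ⟨fun a => f a \ U a, ?_, ?_, ?_, ?_⟩
  · intro a
    refine gev_piece (hUev a) ?_
    have := hS2 a (U a)
    rw [← hfU] at this
    exact this
  · intro a
    exact (mk_le_mk_of_subset Set.sdiff_subset).trans_lt ((hfcard a).trans_lt (hμlt a))
  · intro a b hab
    rw [Set.disjoint_left]
    rintro z ⟨h1, h2⟩ ⟨h3, h4⟩
    rcases lt_or_gt_of_ne hab with h | h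
    · exact h4 (hlt h h1)
    · exact h2 (hlt h h3)
  · refine Set.eq_univ_of_forall fun e => ?_
    obtain ⟨a, ha, hmin⟩ := WellFounded.has_min (wellFounded_lt (α := E)) {a | e ∈ f a}
      ⟨e, by change e ∈ f e; rw [hfU]; exact hSa _ _⟩
    refine Set.mem_iUnion.2 ⟨a, ha, ?_⟩
    intro h
    obtain ⟨b, hb, heb⟩ := Set.mem_iUnion₂.1 h
    exact hmin b heb hb

/-- circuits: minimal nonempty finite even sets of edges -/
def IsCirc {W : Type u} {E : Type v} (J : E → Sym2 W) (A : Set E) : Prop :=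
  A.Finite ∧ A.Nonempty ∧ GEv J A ∧ ∀ B ⊆ A, B.Nonempty → GEv J B → B = A

open Classical in
noncomputable def gchi {W : Type u} {E : Type v} (J : E → Sym2 W) (X : Set W) (e : E) : ZMod 2 :=
  if e ∈ gcut J X then 1 else 0

open Classical in
noncomputable def gind {W : Type u} (X : Set W) (x : W) : ZMod 2 := if x ∈ X then 1 else 0

section
variable {W : Type u} {E : Type v} {J : E → Sym2 W}

lemma gchi_eq {X : Set W} {e : E} {a b : W} (h : J e = s(a, b)) :
    gchi J X e = gind X a + gind X b := by
  unfold gchi gind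
  rw [mem_gcut h]
  by_cases ha : a ∈ X <;> by_cases hb : b ∈ X <;> (simp [ha, hb]; try decide)

lemma even_iff_sum (X : Set W) (A : Finset E) :
    Even (gcut J X ∩ (A : Set E)).ncard ↔ ∑ e ∈ A, gchi J X e = 0 := by
  classical
  have h1 : gcut J X ∩ (A : Set E) = ((A.filter (· ∈ gcut J X) : Finset E) : Set E) := by
    ext e; simp [and_comm]
  rw [h1, Set.ncard_coe_finset]
  unfold gchi
  rw [Finset.sum_boole, ZMod.natCast_eq_zero_iff_even]

lemma gev_finset_iff (A : Finset E) :
    GEv J (A : Set E) ↔ ∀ X, ∑ e ∈ A, gchi J X e = 0 := by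
  constructor
  · intro h X
    exact (even_iff_sum X A).1 (h X (A.finite_toSet.inter_of_right _))
  · intro h X _
    exact (even_iff_sum X A).2 (h X)

lemma gev_diff {F A : Set E} (hF : GEv J F) (hAF : A ⊆ F) (hA : A.Finite) (hAe : GEv J A) :
    GEv J (F \ A) := by
  intro X hX
  have hA' : (gcut J X ∩ A).Finite := hA.inter_of_right _
  have h1 : gcut J X ∩ F = (gcut J X ∩ (F \ A)) ∪ (gcut J X ∩ A) := by
    ext e
    simp only [Set.mem_inter_iff, Set.mem_union, Set.mem_sdiff]
    constructor
    · rintro ⟨h1, h2⟩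
      by_cases h : e ∈ A
      · exact Or.inr ⟨h1, h⟩
      · exact Or.inl ⟨h1, h2, h⟩
    · rintro (⟨h1, h2, h3⟩ | ⟨h1, h2⟩)
      · exact ⟨h1, h2⟩
      · exact ⟨h1, hAF h2⟩
  have hd : Disjoint (gcut J X ∩ (F \ A)) (gcut J X ∩ A) := by
    rw [Set.disjoint_left]
    rintro e ⟨_, _, h⟩ ⟨_, h'⟩
    exact h h'
  have h2 := hF X (by rw [h1]; exact hX.union hA')
  rw [h1, Set.ncard_union_eq hd hX hA', Nat.even_add] at h2
  exact h2.2 (hAe X hA')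

lemma GConn.parity {F : Set E} {x y : W} (h : GConn J F x y) :
    ∃ A : Finset E, (A : Set E) ⊆ F ∧ ∀ X, ∑ e ∈ A, gchi J X e = gind X x + gind X y := by
  classical
  induction h with
  | refl => exact ⟨∅, by simp, fun X => by simp [CharTwo.add_self_eq_zero]⟩
  | @tail b c _ hbc ih =>
    obtain ⟨A, hAF, hA⟩ := ih
    obtain ⟨e, he, h⟩ := hbc
    by_cases heA : e ∈ A
    · refine ⟨A.erase e, fun z hz => hAF (Finset.mem_of_mem_erase hz), fun X => ?_⟩
      have := Finset.sum_erase_add A (gchi J X) heA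
      rw [hA, gchi_eq h] at this
      have h2 : gind X b + gind X b = 0 := CharTwo.add_self_eq_zero _
      have h3 : gind X c + gind X c = 0 := CharTwo.add_self_eq_zero _
      linear_combination this - h3
    · refine ⟨insert e A, ?_, fun X => ?_⟩
      · rw [Finset.coe_insert]; exact Set.insert_subset he hAF
      · rw [Finset.sum_insert heA, hA, gchi_eq h]
        have h2 : gind X b + gind X b = 0 := CharTwo.add_self_eq_zero _
        linear_combination h2

lemma exists_circ {F : Set E} (hF : GEv J F) {e : E} (he : e ∈ F) :
    ∃ A ⊆ F, e ∈ A ∧ IsCirc J A := by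
  classical
  obtain ⟨a, b, hab⟩ : ∃ a b, J e = s(a, b) := by
    induction h : J e with | _ a b => exact ⟨a, b, rfl⟩
  have hconn : GConn J (F \ {e}) a b := by
    by_contra hcon
    let X : Set W := {v | GConn J (F \ {e}) a v}
    have h1 : gcut J X ∩ F = {e} := by
      ext z
      constructor
      · rintro ⟨⟨u, w, h, hu, hw⟩, hz⟩
        by_contra hne
        have hz' : z ∈ F \ {e} := ⟨hz, hne⟩
        exact hw (Relation.ReflTransGen.trans hu (GConn.edge hz' h))
      · rintro rfl
        exact ⟨⟨a, b, hab, Relation.ReflTransGen.refl, hcon⟩, he⟩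
    have := hF X (by rw [h1]; exact Set.finite_singleton _)
    rw [h1, Set.ncard_singleton] at this
    exact absurd this (by decide)
  obtain ⟨A, hAF, hA⟩ := hconn.parity
  have heA : e ∉ A := fun h => (hAF h).2 rfl
  have hev : GEv J ((insert e A : Finset E) : Set E) := by
    rw [gev_finset_iff]
    intro X
    rw [Finset.sum_insert heA, hA, gchi_eq hab]
    exact CharTwo.add_self_eq_zero _
  obtain ⟨B, ⟨hBF, heB, hBev⟩, hmin⟩ := WellFounded.has_min
    (InvImage.wf (fun c : Finset E => c.card) Nat.lt_wfRel.wf)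
    {B : Finset E | (B : Set E) ⊆ F ∧ e ∈ B ∧ GEv J (B : Set E)}
    ⟨insert e A, by rw [Finset.coe_insert]; exact Set.insert_subset he (fun z hz => (hAF hz).1),
      by simp, hev⟩
  refine ⟨B, hBF, heB, B.finite_toSet, ⟨e, heB⟩, hBev, ?_⟩
  intro D hDB hDne hDev
  have hDfin : D.Finite := B.finite_toSet.subset hDB
  lift D to Finset E using hDfin
  have hDB' : D ⊆ B := by exact_mod_cast hDB
  by_contra hne
  have hss : D ⊂ B := lt_of_le_of_ne hDB' (fun h => hne (by rw [h]))
  by_cases heD : e ∈ D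
  · exact hmin D ⟨hDB.trans hBF, heD, hDev⟩ (Finset.card_lt_card hss)
  · have h1 : GEv J ((B \ D : Finset E) : Set E) := by
      rw [Finset.coe_sdiff]
      exact gev_diff hBev hDB D.finite_toSet hDev
    refine hmin (B \ D) ⟨fun z hz => hBF (Finset.mem_sdiff.1 hz).1,
      Finset.mem_sdiff.2 ⟨heB, heD⟩, h1⟩ ?_
    refine Finset.card_lt_card (Finset.sdiff_ssubset hDB' ?_)
    exact_mod_cast hDne

/-- existence of a decomposition into circuits -/
def GDec {W : Type u} {E : Type v} (J : E → Sym2 W) : Prop :=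
  ∃ As : Set (Set E), (∀ A ∈ As, IsCirc J A) ∧ As.Pairwise Disjoint ∧ ⋃₀ As = Set.univ

lemma gdec_countable [Countable E] (hE : GEv J Set.univ) : GDec J := by
  classical
  rcases isEmpty_or_nonempty E with hemp | hne
  · exact ⟨∅, by simp, by simp, by ext e; exact hemp.elim e⟩
  obtain ⟨enum, henum⟩ := exists_surjective_nat E
  have hstep : ∀ (R : {R : Set E // GEv J R}) (e : E), ∃ A : Set E, A ⊆ R.1 ∧ (e ∈ R.1 → e ∈ A) ∧
      A.Finite ∧ GEv J A ∧ (A.Nonempty → IsCirc J A) := by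
    intro R e
    by_cases he : e ∈ R.1
    · obtain ⟨A, h1, h2, h3⟩ := exists_circ R.2 he
      exact ⟨A, h1, fun _ => h2, h3.1, h3.2.2.1, fun _ => h3⟩
    · exact ⟨∅, Set.empty_subset _, fun h => absurd h he, Set.finite_empty,
        fun X _ => by simp, fun h => absurd h Set.not_nonempty_empty⟩
  choose A hA1 hA2 hA3 hA4 hA5 using hstep
  let R : ℕ → {R : Set E // GEv J R} := fun n => Nat.rec ⟨Set.univ, hE⟩
    (fun n R => ⟨R.1 \ A R (enum n), gev_diff R.2 (hA1 _ _) (hA3 _ _) (hA4 _ _)⟩) n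
  have hR : ∀ n, (R (n+1)).1 = (R n).1 \ A (R n) (enum n) := fun n => rfl
  have hanti : Antitone (fun n => (R n).1) := antitone_nat_of_succ_le fun n => by
    rw [hR]; exact Set.sdiff_subset
  let B : ℕ → Set E := fun n => A (R n) (enum n)
  have hdisj : ∀ m n, m < n → Disjoint (B m) (B n) := by
    intro m n hmn
    rw [Set.disjoint_left]
    intro e h1 h2
    have h3 : e ∈ (R (m+1)).1 := hanti (Nat.succ_le_of_lt hmn) (hA1 _ _ h2)
    rw [hR] at h3
    exact h3.2 h1
  refine ⟨{D | D.Nonempty ∧ ∃ n, D = B n}, ?_, ?_, ?_⟩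
  · rintro D ⟨hD, n, rfl⟩
    exact hA5 _ _ hD
  · rintro D ⟨hD, n, rfl⟩ D' ⟨hD', m, rfl⟩ hne
    rcases lt_trichotomy n m with h | h | h
    · exact hdisj _ _ h
    · exact absurd (by rw [h]) hne
    · exact (hdisj _ _ h).symm
  · refine Set.eq_univ_of_forall fun e => ?_
    obtain ⟨n, rfl⟩ := henum e
    have : ∀ m, enum n ∉ (R m).1 → ∃ k, enum n ∈ B k := by
      intro m
      induction m with
      | zero => intro h; exact absurd trivial h
      | succ m ih =>
        intro h
        rw [hR] at h
        by_cases h1 : enum n ∈ (R m).1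
        · exact ⟨m, by_contra fun h2 => h ⟨h1, h2⟩⟩
        · exact ih h1
    obtain ⟨k, hk⟩ : ∃ k, enum n ∈ B k := by
      by_cases h : enum n ∈ (R n).1
      · exact ⟨n, hA2 _ _ h⟩
      · exact this n h
    exact ⟨B k, ⟨⟨_, hk⟩, k, rfl⟩, hk⟩

lemma gev_sub (P : Set E) (A : Set P) :
    GEv (fun e : P => J e.1) A ↔ GEv J (Subtype.val '' A) := by
  have h : ∀ X, gcut J X ∩ Subtype.val '' A =
      Subtype.val '' (gcut (fun e : P => J e.1) X ∩ A) := by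
    intro X
    ext e
    constructor
    · rintro ⟨h1, ⟨e, h2, rfl⟩⟩
      exact ⟨e, ⟨h1, h2⟩, rfl⟩
    · rintro ⟨e, ⟨h1, h2⟩, rfl⟩
      exact ⟨h1, e, h2, rfl⟩
  unfold GEv
  refine forall_congr' fun X => ?_
  rw [h, Set.finite_image_iff Subtype.val_injective.injOn,
    Set.ncard_image_of_injective _ Subtype.val_injective]

lemma circ_sub (P : Set E) (A : Set P) (h : IsCirc (fun e : P => J e.1) A) :
    IsCirc J (Subtype.val '' A) := by
  obtain ⟨h1, h2, h3, h4⟩ := h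
  refine ⟨h1.image _, h2.image _, (gev_sub P A).1 h3, ?_⟩
  intro B hB hBne hBev
  have hB' : B = Subtype.val '' (Subtype.val ⁻¹' B : Set P) := by
    rw [Subtype.image_preimage_coe, Set.inter_eq_right.2]
    intro e he
    obtain ⟨z, _, rfl⟩ := hB he
    exact z.2
  rw [hB'] at hBev hBne ⊢
  rw [h4 _ _ (Set.image_nonempty.1 hBne) ((gev_sub P _).2 hBev)]
  intro z hz
  obtain ⟨w, hw, hwz⟩ := hB hz
  rwa [← Subtype.ext hwz]

end

open Cardinal in
theorem gdec {W : Type u} (κ : Cardinal.{v}) : ∀ (E : Type v) (J : E → Sym2 W), #E = κ →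
    GEv J Set.univ → GDec J := by
  induction κ using WellFoundedLT.induction with
  | _ κ ih =>
    intro E J hκ hE
    rcases le_or_gt #E ℵ₀ with hc | hc
    · have : Countable E := mk_le_aleph0_iff.1 hc
      exact gdec_countable hE
    · obtain ⟨P, hPev, hPcard, hPd, hPu⟩ := gstep hE hc
      have : ∀ a, GDec (fun e : P a => J e.1) := by
        intro a
        refine ih #(P a) (hκ ▸ hPcard a) _ _ rfl ?_
        rw [gev_sub]
        simpa using hPev a
      choose As h1 h2 h3 using this
      refine ⟨⋃ a, (fun A : Set (P a) => Subtype.val '' A) '' As a, ?_, ?_, ?_⟩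
      · rintro A' hA'
        obtain ⟨a, A, hA, rfl⟩ := Set.mem_iUnion.1 hA'
        exact circ_sub _ _ (h1 a A hA)
      · rintro A' hA' B' hB' hne
        obtain ⟨a, A, hA, rfl⟩ := Set.mem_iUnion.1 hA'
        obtain ⟨b, B, hB, rfl⟩ := Set.mem_iUnion.1 hB'
        by_cases hab : a = b
        · subst hab
          refine (Set.disjoint_image_iff Subtype.val_injective).2 (h2 a hA hB ?_)
          rintro rfl
          exact hne rfl
        · refine (hPd hab).mono ?_ ?_ <;> rintro _ ⟨z, _, rfl⟩ <;> exact z.2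
      · refine Set.eq_univ_of_forall fun e => ?_
        obtain ⟨a, ha⟩ := Set.mem_iUnion.1 (hPu ▸ Set.mem_univ e)
        obtain ⟨A, hA, heA⟩ := (h3 a ▸ Set.mem_univ (⟨e, ha⟩ : P a) :
          (⟨e, ha⟩ : P a) ∈ ⋃₀ As a)
        exact ⟨_, Set.mem_iUnion.2 ⟨a, A, hA, rfl⟩, _, heA, rfl⟩

namespace Grapht
variable {V : Type u} {E : Type v} {G : Grapht V E}

lemma IsWalk.sum {vs : List V} {es : List E} (h : G.IsWalk vs es) (X : Set V) :
    ∀ a b, vs.head? = some a → vs.getLast? = some b →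
      (es.map (gchi G.I X)).sum = gind X a + gind X b := by
  induction h with
  | nil v =>
    intro a b ha hb
    simp only [List.head?_cons, Option.some.injEq, List.getLast?_singleton] at ha hb
    subst ha; subst hb
    simp [CharTwo.add_self_eq_zero]
  | @cons u w vs e es he _ ih =>
    intro a b ha hb
    simp only [List.head?_cons, Option.some.injEq] at ha
    subst ha
    rw [List.getLast?_cons_cons] at hb
    rw [List.map_cons, List.sum_cons, ih w b rfl hb, gchi_eq he]
    have h2 : gind X w + gind X w = 0 := CharTwo.add_self_eq_zero _
    linear_combination h2

lemma IsWalk.mem_verts {vs : List V} {es : List E} (h : G.IsWalk vs es) :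
    ∀ e ∈ es, ∀ x ∈ G.I e, x ∈ vs := by
  induction h with
  | nil v => simp
  | @cons u w vs e es he _ ih =>
    intro f hf x hx
    rcases List.mem_cons.1 hf with rfl | hf
    · rw [he, Sym2.mem_iff] at hx
      rcases hx with rfl | rfl <;> simp
    · exact List.mem_cons_of_mem _ (ih f hf x hx)

lemma IsWalk.nodup_edges {vs : List V} {es : List E} (h : G.IsWalk vs es) (hn : vs.Nodup) :
    es.Nodup := by
  induction h with
  | nil v => simp
  | @cons u w vs e es he hw ih =>
    rw [List.nodup_cons] at hn ⊢
    refine ⟨fun hmem => hn.1 (hw.mem_verts e hmem u (by simp [he])), ih hn.2⟩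

lemma IsWalk.split {vs : List V} {es : List E} (h : G.IsWalk vs es) :
    ∀ (l₁ : List V) (z : V) (l₂ : List V), vs = l₁ ++ z :: l₂ →
      ∃ es₁ es₂, es = es₁ ++ es₂ ∧ G.IsWalk (l₁ ++ [z]) es₁ := by
  induction h with
  | nil v =>
    intro l₁ z l₂ h
    rcases l₁ with _ | ⟨a, l₁⟩
    · exact ⟨[], [], rfl, IsWalk.nil z⟩
    · simp at h
  | @cons u w vs e es he hw ih =>
    intro l₁ z l₂ h
    rcases l₁ with _ | ⟨a, l₁⟩
    · exact ⟨[], e :: es, rfl, IsWalk.nil z⟩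
    · rw [List.cons_append, List.cons.injEq] at h
      obtain ⟨rfl, h⟩ := h
      obtain ⟨es₁, es₂, h1, h2⟩ := ih l₁ z l₂ h
      refine ⟨e :: es₁, es₂, by simp [h1], ?_⟩
      rcases l₁ with _ | ⟨b, l₁⟩
      · simp only [List.nil_append, List.cons.injEq] at h
        obtain ⟨rfl, _⟩ := h
        exact IsWalk.cons he h2
      · simp only [List.cons_append, List.cons.injEq] at h
        obtain ⟨rfl, _⟩ := h
        exact IsWalk.cons he h2

/-- edge sets of cycles and `T`-paths -/
def Good (G : Grapht V E) (A : Set E) : Prop :=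
  (∃ C : G.Cycle, A = C.edgeSet) ∨ ∃ P : G.Path, G.IsTPath P ∧ A = P.edgeSet

/-- evenness with respect to terminal-free vertex sets -/
def TEv (G : Grapht V E) (F : Set E) : Prop :=
  ∀ X : Set V, Disjoint X G.T → (gcut G.I X ∩ F).Finite → Even (gcut G.I X ∩ F).ncard

lemma even_list {es : List E} (hn : es.Nodup) (X : Set V)
    (h : (es.map (gchi G.I X)).sum = 0) : Even (gcut G.I X ∩ {e | e ∈ es}).ncard := by
  classical
  have h1 : {e | e ∈ es} = (es.toFinset : Set E) := by ext; simp
  rw [h1, even_iff_sum, List.sum_toFinset _ hn]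
  exact h

lemma Good.finite {A : Set E} (h : G.Good A) : A.Finite := by
  rcases h with ⟨C, rfl⟩ | ⟨P, _, rfl⟩
  · exact List.finite_toSet C.edges
  · exact List.finite_toSet P.edges

lemma Good.tev {A : Set E} (h : G.Good A) : G.TEv A := by
  intro X hX _
  rcases h with ⟨C, rfl⟩ | ⟨P, hP, rfl⟩
  · refine even_list C.edges_nodup X ?_
    have hne : C.verts ≠ [] := by
      have := C.isWalk
      intro h
      rw [h] at this
      cases this
    have h1 := List.head?_eq_some_head hne
    rw [C.isWalk.sum X _ _ h1 (C.closed ▸ h1)]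
    exact CharTwo.add_self_eq_zero _
  · refine even_list (P.isWalk.nodup_edges P.nodup) X ?_
    rw [P.isWalk.sum X _ _ P.head_eq P.getLast_eq]
    have h1 : P.first ∉ X := fun h => Set.disjoint_left.1 hX h hP.1
    have h2 : P.last ∉ X := fun h => Set.disjoint_left.1 hX h hP.2.1
    simp [gind, h1, h2]

lemma exists_good_aux (A : Finset E) (hA : G.TEv (A : Set E)) (t : V)
    (ht : t ∈ G.T ∨ ∀ e ∈ A, ∀ x ∈ G.I e, x ∉ G.T) (n : ℕ) :
    ∀ (h : V) (l : List V) (e₀ : E) (es : List E),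
      G.IsWalk (h :: (l ++ [t])) (e₀ :: es) → (h :: (l ++ [t])).Nodup →
      (∀ e ∈ e₀ :: es, e ∈ A) → (∀ v ∈ h :: l, v ∉ G.T) → A.card - es.length = n →
      ∃ B : Set E, B ⊆ A ∧ B.Nonempty ∧ G.Good B := by
  classical
  induction n using Nat.strong_induction_on with
  | _ n ih =>
  intro h l e₀ es hw hnd hesA hlT hn
  have hlen : (e₀ :: es).length ≤ A.card := by
    rw [← List.toFinset_card_of_nodup (hw.nodup_edges hnd)]
    refine Finset.card_le_card fun e he => hesA e (List.mem_toFinset.1 he)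
  obtain ⟨w, vs, hwv⟩ : ∃ w vs, l ++ [t] = w :: vs := by
    rcases l with _ | ⟨b, l⟩
    · exact ⟨t, [], rfl⟩
    · exact ⟨b, l ++ [t], rfl⟩
  have hinv : G.I e₀ = s(h, w) ∧ G.IsWalk (w :: vs) es := by
    rw [hwv] at hw
    cases hw with
    | cons h1 h2 => exact ⟨h1, h2⟩
  obtain ⟨he₀, hw'⟩ := hinv
  have hhn : h ∉ l ++ [t] := (List.nodup_cons.1 hnd).1
  have hwh : w ≠ h := by
    rintro rfl
    exact hhn (by rw [hwv]; simp)
  have hhT : h ∉ G.T := hlT h (by simp)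
  have hsum : ∑ e ∈ A, gchi G.I {h} e = 0 := by
    rw [← even_iff_sum]
    exact hA {h} (Set.disjoint_singleton_left.2 hhT) (A.finite_toSet.inter_of_right _)
  obtain ⟨e', he'A, hne, hχ⟩ : ∃ e' ∈ A, e' ≠ e₀ ∧ gchi G.I {h} e' ≠ 0 := by
    by_contra hcon
    push Not at hcon
    rw [Finset.sum_eq_single_of_mem e₀ (hesA e₀ (by simp)) hcon, gchi_eq he₀] at hsum
    simp [gind, hwh] at hsum
  have hcut : e' ∈ gcut G.I {h} := by
    by_contra hc
    exact hχ (by simp [gchi, hc])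
  obtain ⟨h', z, he', hh', hz⟩ := hcut
  obtain rfl : h' = h := hh'
  have hzh : z ≠ h' := hz
  have he'n : e' ∉ e₀ :: es := by
    intro hmem
    rcases List.mem_cons.1 hmem with h1 | h1
    · exact hne h1
    · exact hhn (by rw [hwv]; exact hw'.mem_verts e' h1 h' (by simp [he']))
  have he'' : G.I e' = s(z, h') := by rw [he', Sym2.eq_swap]
  by_cases hzl : z ∈ l ++ [t]
  · obtain ⟨m₁, m₂, hm⟩ := List.append_of_mem hzl
    obtain ⟨es₁, es₂, h1, h2⟩ := hw.split (h' :: m₁) z m₂ (by rw [hm]; rfl)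
    have hnd' : (h' :: m₁ ++ [z]).Nodup := by
      refine List.Nodup.sublist ?_ hnd
      rw [hm, List.cons_append]
      refine List.Sublist.cons_cons _ (List.Sublist.append_left ?_ _)
      simp
    refine ⟨{e | e ∈ e' :: es₁}, ?_, ⟨e', by simp⟩, Or.inl ⟨{
      verts := z :: (h' :: m₁ ++ [z])
      edges := e' :: es₁
      isWalk := IsWalk.cons he'' h2
      closed := by simp [List.getLast?_cons]
      nontrivial := by simp
      edges_nodup := ?_
      tail_nodup := hnd' }, rfl⟩⟩
    · intro e he
      rcases List.mem_cons.1 he with rfl | he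
      · exact he'A
      · exact hesA e (by rw [h1]; exact List.mem_append_left _ he)
    · refine List.nodup_cons.2 ⟨fun hmem => he'n ?_, h2.nodup_edges hnd'⟩
      rw [h1]; exact List.mem_append_left _ hmem
  · have hnd' : (z :: h' :: (l ++ [t])).Nodup := by
      refine List.nodup_cons.2 ⟨?_, hnd⟩
      intro hmem
      rcases List.mem_cons.1 hmem with h1 | h1
      · exact hzh h1
      · exact hzl h1
    have hw2 : G.IsWalk (z :: h' :: (l ++ [t])) (e' :: e₀ :: es) := IsWalk.cons he'' hw
    have hsub : ∀ e ∈ e' :: e₀ :: es, e ∈ A := by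
      intro e he
      rcases List.mem_cons.1 he with rfl | he
      · exact he'A
      · exact hesA e he
    by_cases hzT : z ∈ G.T
    · have htT : t ∈ G.T := by
        rcases ht with ht | ht
        · exact ht
        · exact absurd hzT (ht e' he'A z (by simp [he']))
      refine ⟨{e | e ∈ e' :: e₀ :: es}, fun e he => hsub e he, ⟨e', by simp⟩, Or.inr ⟨{
        first := z
        last := t
        verts := z :: h' :: (l ++ [t])
        edges := e' :: e₀ :: es
        isWalk := hw2
        nodup := hnd'
        head_eq := rfl
        getLast_eq := by simp [List.getLast?_cons] }, ⟨hzT, htT, ?_, ?_⟩, rfl⟩⟩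
      · change z ≠ t
        intro hzt
        exact hzl (by simp [hzt])
      · intro v hv
        refine hlT v ?_
        have h1 : (List.drop 1 (z :: h' :: (l ++ [t]))).dropLast = h' :: l := by
          rw [List.drop_one, List.tail_cons, ← List.cons_append, List.dropLast_concat]
        change v ∈ (List.drop 1 (z :: h' :: (l ++ [t]))).dropLast at hv
        rwa [h1] at hv
    · refine ih (A.card - (e₀ :: es).length) ?_ z (h' :: l) e' (e₀ :: es) hw2 hnd' hsub ?_ rfl
      · simp only [List.length_cons] at hlen ⊢
        omega
      · intro v hv
        rcases List.mem_cons.1 hv with rfl | hv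
        · exact hzT
        · exact hlT v hv

lemma exists_good (A : Finset E) (hA : G.TEv (A : Set E)) (hne : A.Nonempty) :
    ∃ B : Set E, B ⊆ A ∧ B.Nonempty ∧ G.Good B := by
  obtain ⟨e, he, t, h, heth, ht⟩ : ∃ e ∈ A, ∃ t h, G.I e = s(h, t) ∧
      (t ∈ G.T ∨ ∀ e ∈ A, ∀ x ∈ G.I e, x ∉ G.T) := by
    by_cases hc : ∀ e ∈ A, ∀ x ∈ G.I e, x ∉ G.T
    · obtain ⟨e, he⟩ := hne
      obtain ⟨a, b, hab⟩ : ∃ a b, G.I e = s(a, b) := by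
        induction h : G.I e with | _ a b => exact ⟨a, b, rfl⟩
      exact ⟨e, he, b, a, hab, Or.inr hc⟩
    · push Not at hc
      obtain ⟨e, he, x, hx, hxT⟩ := hc
      obtain ⟨y, hy⟩ := Sym2.mem_iff_exists.1 hx
      exact ⟨e, he, x, y, by rw [hy, Sym2.eq_swap], Or.inl hxT⟩
  have hht : h ≠ t := by
    rintro rfl
    exact G.loopless e (by rw [heth]; exact rfl)
  have hw : G.IsWalk [h, t] [e] := IsWalk.cons heth (IsWalk.nil t)
  have hnd : [h, t].Nodup := by simp [hht]
  by_cases hT : h ∈ G.T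
  · have htT : t ∈ G.T := by
      rcases ht with ht | ht
      · exact ht
      · exact absurd hT (ht e he h (by simp [heth]))
    refine ⟨{x | x ∈ [e]}, ?_, ⟨e, by simp⟩, Or.inr ⟨{
        first := h
        last := t
        verts := [h, t]
        edges := [e]
        isWalk := hw
        nodup := hnd
        head_eq := rfl
        getLast_eq := rfl }, ⟨hT, htT, hht, ?_⟩, rfl⟩⟩
    · intro x hx
      obtain rfl : x = e := by simpa using hx
      exact he
    · intro v hv
      simp [Path.inner] at hv
  · refine exists_good_aux A hA t ht _ h [] e [] hw hnd ?_ ?_ rfl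
    · intro x hx
      obtain rfl : x = e := by simpa using hx
      exact he
    · intro x hx
      obtain rfl : x = h := by simpa using hx
      exact hT

open Classical in
/-- contraction of all terminals to one of them -/
noncomputable def cpi (G : Grapht V E) (v : V) : V :=
  if v ∈ G.T then G.T_nontrivial.nonempty.some else v

lemma gcut_cpi (X : Set V) :
    gcut (fun e => (G.I e).map G.cpi) X = gcut G.I (G.cpi ⁻¹' X) := by
  ext e
  obtain ⟨a, b, hab⟩ : ∃ a b, G.I e = s(a, b) := by
    induction h : G.I e with | _ a b => exact ⟨a, b, rfl⟩
  rw [mem_gcut hab, mem_gcut (a := G.cpi a) (b := G.cpi b) (by simp [hab])]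
  rfl

lemma gcut_compl {J : E → Sym2 V} (X : Set V) : gcut J Xᶜ = gcut J X := by
  ext e
  obtain ⟨a, b, hab⟩ : ∃ a b, J e = s(a, b) := by
    induction h : J e with | _ a b => exact ⟨a, b, rfl⟩
  rw [mem_gcut hab, mem_gcut hab, Set.mem_compl_iff, Set.mem_compl_iff, not_iff_not, not_iff_not]

lemma tev_iff (F : Set E) : G.TEv F ↔ GEv (fun e => (G.I e).map G.cpi) F := by
  constructor
  · intro h X
    have key : ∀ X : Set V, G.T_nontrivial.nonempty.some ∉ X →
        (gcut (fun e => (G.I e).map G.cpi) X ∩ F).Finite →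
        Even (gcut (fun e => (G.I e).map G.cpi) X ∩ F).ncard := by
      intro X hX
      rw [gcut_cpi]
      refine h _ ?_
      rw [Set.disjoint_left]
      intro v hv hvT
      rw [Set.mem_preimage, cpi, if_pos hvT] at hv
      exact hX hv
    by_cases hX : G.T_nontrivial.nonempty.some ∈ X
    · rw [← gcut_compl]
      exact key Xᶜ (fun h => h hX)
    · exact key X hX
  · intro h X hX
    have h1 : G.cpi ⁻¹' X = X := by
      ext v
      rw [Set.mem_preimage, cpi]
      split_ifs with hv
      · constructor
        · intro h2
          exact absurd G.T_nontrivial.nonempty.some_mem (Set.disjoint_left.1 hX h2)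
        · intro h2
          exact absurd hv (Set.disjoint_left.1 hX h2)
      · rfl
    have := h X
    rw [gcut_cpi, h1] at this
    exact this

lemma tev_univ_iff : G.TEv Set.univ ↔ G.InnerEulerian := by
  unfold TEv InnerEulerian
  refine forall_congr' fun X => forall_congr' fun _ => ?_
  rw [Set.inter_univ, not_and, Nat.not_odd_iff_even]
  rfl

lemma even_of_pieces {As : Set (Set E)} (hd : As.Pairwise Disjoint) (hu : ⋃₀ As = Set.univ)
    (n : ℕ) : ∀ D : Set E, D.Finite → D.ncard = n → (∀ A ∈ As, Even (D ∩ A).ncard) →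
      Even D.ncard := by
  induction n using Nat.strong_induction_on with
  | _ n ih =>
  intro D hD hn hA
  rcases D.eq_empty_or_nonempty with rfl | ⟨e, he⟩
  · simp
  obtain ⟨A, hAs, heA⟩ : e ∈ ⋃₀ As := hu ▸ Set.mem_univ e
  have hcard := Set.ncard_inter_add_ncard_sdiff_eq_ncard D A hD
  have hpos : 0 < (D ∩ A).ncard := (Set.ncard_pos (hD.inter_of_left _)).2 ⟨e, he, heA⟩
  rw [← hcard]
  refine (hA A hAs).add (ih _ (by omega) (D \ A) (hD.subset Set.sdiff_subset) rfl ?_)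
  intro B hB
  by_cases hAB : A = B
  · subst hAB
    have : D \ A ∩ A = ∅ := by ext x; simp
    rw [this]; simp
  · have : D \ A ∩ B = D ∩ B := by
      ext x
      have : x ∈ A → x ∉ B := fun h => Set.disjoint_left.1 (hd hAs hB hAB) h
      simp only [Set.mem_inter_iff, Set.mem_sdiff]
      tauto
    rw [this]; exact hA B hB

end Grapht

/-- A grapht admits an edge-partition into cycles and `T`-paths iff it is inner
Eulerian. -/
theorem edge_partition_iff_innerEulerian {V : Type u} {E : Type v} (G : Grapht V E) :
    (∃ As : Set (Set E),
      (∀ A ∈ As, (∃ C : G.Cycle, A = C.edgeSet) ∨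
        ∃ P : G.Path, G.IsTPath P ∧ A = P.edgeSet) ∧
      As.Pairwise Disjoint ∧ ⋃₀ As = Set.univ) ↔ G.InnerEulerian := by
  constructor
  · rintro ⟨As, hgood, hd, hu⟩
    rw [← Grapht.tev_univ_iff]
    intro X hX hfin
    rw [Set.inter_univ] at hfin ⊢
    refine Grapht.even_of_pieces hd hu _ _ hfin rfl fun A hA => ?_
    exact Grapht.Good.tev (hgood A hA) X hX (hfin.inter_of_left _)
  · intro h
    rw [← Grapht.tev_univ_iff, Grapht.tev_iff] at h
    obtain ⟨As, hc, hd, hu⟩ := gdec _ E _ rfl h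
    refine ⟨As, fun A hA => ?_, hd, hu⟩
    obtain ⟨hfin, hne, hev, hmin⟩ := hc A hA
    lift A to Finset E using hfin
    obtain ⟨B, hBA, hBne, hB⟩ := Grapht.exists_good A ((Grapht.tev_iff _).2 hev)
      (by exact_mod_cast hne)
    have := hmin B hBA hBne ((Grapht.tev_iff _).1 hB.tev)
    rw [← this]
    exact hB
end

section
/- Let G=(V,E,I,{s,t}) be a grapht with terminal set {s,t}. Suppose s is linked and every system of pairwise edge-disjoint st-paths covering δ_G(s) uses the edge e∈E∖δ_G(s). Let C be an Erdős-Menger st-cut containing e that satisfies C ⊴ C' for every Erdős-Menger st-cut C' containing e. Then C is tight: every linkage of s is orthogonal to C. -/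
/-! Common definitions: graphts (multigraphs with terminals), walks, paths, cycles,
edge cuts, inner Eulerian graphts, path systems, linkages, Erdős–Menger cuts,
restriction (edge deletion) and contraction. -/

universe u v

namespace Grapht

variable {V : Type u} {E : Type v}

/-- Directed walks as lists of darts `(source, edge, target)`. -/
def DW (G : Grapht V E) : V → List (V × E × V) → V → Prop
  | a, [], b => a = b
  | a, x :: l, b => a = x.1 ∧ G.I x.2.1 = s(x.1, x.2.2) ∧ DW G x.2.2 l b

theorem DW_append {G : Grapht V E} {l₁ l₂ : List (V × E × V)} {a b : V} :
    G.DW a (l₁ ++ l₂) b ↔ ∃ c, G.DW a l₁ c ∧ G.DW c l₂ b := by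
  induction l₁ generalizing a with
  | nil => simp [DW]
  | cons x l ih =>
    simp only [List.cons_append, DW, ih]
    constructor
    · rintro ⟨h1, h2, c, h3, h4⟩
      exact ⟨c, ⟨h1, h2, h3⟩, h4⟩
    · rintro ⟨c, ⟨h1, h2, h3⟩, h4⟩
      exact ⟨h1, h2, c, h3, h4⟩

theorem DW_I {G : Grapht V E} {l : List (V × E × V)} {a b : V} (h : G.DW a l b) :
    ∀ x ∈ l, G.I x.2.1 = s(x.1, x.2.2) := by
  induction l generalizing a with
  | nil => simp
  | cons y l ih =>
    obtain ⟨h1, h2, h3⟩ := h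
    intro x hx
    rcases List.mem_cons.1 hx with rfl | hx
    · exact h2
    · exact ih h3 x hx

theorem DW_src {G : Grapht V E} {l : List (V × E × V)} {a b : V} (h : G.DW a l b) :
    ∀ x ∈ l, x.1 = a ∨ ∃ y ∈ l, y.2.2 = x.1 := by
  induction l generalizing a with
  | nil => simp
  | cons y l ih =>
    obtain ⟨h1, h2, h3⟩ := h
    intro x hx
    rcases List.mem_cons.1 hx with rfl | hx
    · exact Or.inl h1.symm
    · rcases ih h3 x hx with h | ⟨z, hz, h⟩
      · exact Or.inr ⟨y, by simp, h.symm⟩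
      · exact Or.inr ⟨z, by simp [hz], h⟩

theorem I_cases {G : Grapht V E} {g : E} {a b c d : V} (h : G.I g = s(a, b))
    (h' : G.I g = s(c, d)) : (a = c ∧ b = d) ∨ (a = d ∧ b = c) := by
  rw [h] at h'
  simpa using h'

theorem I_ne {G : Grapht V E} {g : E} {a b : V} (h : G.I g = s(a, b)) : a ≠ b := by
  have := G.loopless g
  rw [h] at this
  simpa using this

/-- every path yields a dart walk -/
theorem walk_darts {G : Grapht V E} {vs : List V} {es : List E} (h : G.IsWalk vs es)
    {a b : V} (ha : vs.head? = some a) (hb : vs.getLast? = some b) :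
    ∃ l : List (V × E × V), G.DW a l b ∧ es = l.map (fun x => x.2.1) ∧
      vs = a :: l.map (fun x => x.2.2) := by
  induction h generalizing a with
  | nil v =>
    simp at ha hb
    subst ha hb
    exact ⟨[], rfl, rfl, rfl⟩
  | @cons u w vs e es hI hw ih =>
    simp at ha
    subst ha
    obtain ⟨l, h1, h2, h3⟩ := ih (a := w) (by simp) (by simpa [List.getLast?_cons_cons] using hb)
    refine ⟨(u, e, w) :: l, ⟨rfl, hI, h1⟩, by simp [h2], by simpa using h3⟩

theorem edges_nodup_of {G : Grapht V E} {l : List (V × E × V)} {a b : V} (h : G.DW a l b)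
    (hn : (a :: l.map (fun x => x.2.2)).Nodup) : (l.map (fun x => x.2.1)).Nodup := by
  induction l generalizing a with
  | nil => simp
  | cons x l ih =>
    obtain ⟨h1, h2, h3⟩ := h
    rw [List.nodup_cons] at hn
    rw [List.map_cons, List.nodup_cons]
    refine ⟨?_, ih h3 (by simpa using hn.2)⟩
    intro hx
    obtain ⟨y, hy, hyx⟩ := List.mem_map.1 hx
    have hIy := DW_I h3 y hy
    have hyx : y.2.1 = x.2.1 := hyx
    rw [hyx] at hIy
    have hna := hn.1
    simp only [List.map_cons, List.mem_cons, List.mem_map, not_or, not_exists, not_and] at hna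
    rcases I_cases h2 hIy with ⟨h, -⟩ | ⟨h, -⟩
    · rcases DW_src h3 y hy with h' | ⟨z, hz, h'⟩
      · exact hna.1 (by rw [h1, h, h'])
      · exact hna.2 z hz (by rw [h', ← h, h1])
    · exact hna.2 y hy (by rw [h1, h])

theorem DW_suffix {G : Grapht V E} {l : List (V × E × V)} {a b c : V} (h : G.DW a l b)
    (hc : c ∈ a :: l.map (fun x => x.2.2)) (hn : (a :: l.map (fun x => x.2.2)).Nodup) :
    ∃ l', l' ⊆ l ∧ G.DW c l' b ∧ (c :: l'.map (fun x => x.2.2)).Nodup := by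
  induction l generalizing a with
  | nil =>
    simp at hc
    subst hc
    exact ⟨[], by simp, h, by simp⟩
  | cons x l ih =>
    rcases List.mem_cons.1 hc with rfl | hc
    · exact ⟨_, List.Subset.refl _, h, hn⟩
    · obtain ⟨h1, h2, h3⟩ := h
      obtain ⟨l', h4, h5, h6⟩ := ih h3 (by simpa using hc) (by simpa using (List.nodup_cons.1 hn).2)
      exact ⟨l', fun y hy => List.mem_cons_of_mem _ (h4 hy), h5, h6⟩

theorem DW_shorten {G : Grapht V E} {l : List (V × E × V)} {a b : V} (h : G.DW a l b) :
    ∃ l', l' ⊆ l ∧ G.DW a l' b ∧ (a :: l'.map (fun x => x.2.2)).Nodup := by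
  induction l generalizing a with
  | nil => exact ⟨[], by simp, h, by simp⟩
  | cons x l ih =>
    obtain ⟨h1, h2, h3⟩ := h
    obtain ⟨l', h4, h5, h6⟩ := ih h3
    by_cases hc : a ∈ x.2.2 :: l'.map (fun x => x.2.2)
    · obtain ⟨l'', h7, h8, h9⟩ := DW_suffix h5 hc h6
      exact ⟨l'', fun y hy => List.mem_cons_of_mem _ (h4 (h7 hy)), h8, h9⟩
    · refine ⟨x :: l', List.cons_subset_cons _ h4, ⟨h1, h2, h5⟩, ?_⟩
      rw [List.nodup_cons]
      exact ⟨by simpa using hc, by simpa using h6⟩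

theorem DW_isWalk {G : Grapht V E} {l : List (V × E × V)} {a b : V} (h : G.DW a l b) :
    G.IsWalk (a :: l.map (fun x => x.2.2)) (l.map (fun x => x.2.1)) ∧
      (a :: l.map (fun x => x.2.2)).getLast? = some b := by
  induction l generalizing a with
  | nil =>
    have : a = b := h
    subst this
    exact ⟨IsWalk.nil _, rfl⟩
  | cons x l ih =>
    obtain ⟨h1, h2, h3⟩ := h
    subst h1
    obtain ⟨h4, h5⟩ := ih h3
    exact ⟨IsWalk.cons h2 h4, by simpa [List.getLast?_cons_cons] using h5⟩

theorem DW_path {G : Grapht V E} {l : List (V × E × V)} {a b : V} (h : G.DW a l b)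
    (hn : (a :: l.map (fun x => x.2.2)).Nodup) :
    ∃ P : G.Path, G.IsABPath {a} {b} P ∧ P.edges = l.map (fun x => x.2.1) := by
  obtain ⟨h1, h2⟩ := DW_isWalk h
  refine ⟨⟨a, b, _, _, h1, hn, rfl, h2⟩, ⟨rfl, rfl, ?_⟩, rfl⟩
  intro v hv
  simp only [Path.inner, List.drop_one, List.tail_cons] at hv
  rw [List.nodup_cons] at hn
  have hvm := List.dropLast_subset _ hv
  simp only [Set.mem_union, Set.mem_singleton_iff, not_or]
  refine ⟨fun hva => hn.1 (hva ▸ hvm), fun hvb => ?_⟩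
  subst hvb
  have hne : l.map (fun x => x.2.2) ≠ [] := List.ne_nil_of_mem hvm
  have hlast : (l.map (fun x => x.2.2)).getLast hne = v := by
    have : (a :: l.map (fun x => x.2.2)).getLast? = some v := h2
    rw [List.getLast?_eq_some_getLast (by simp), List.getLast_cons hne] at this
    simpa using this
  have h3 := hn.2
  rw [← List.dropLast_append_getLast hne, hlast] at h3
  rw [List.nodup_append] at h3
  exact h3.2.2 v hv v (by simp) rfl

/-- dart lists of st-paths -/
theorem path_darts {G : Grapht V E} {s t : V} (hst : s ≠ t) (P : G.Path)
    (hP : G.IsABPath {s} {t} P) :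
    ∃ l : List (V × E × V), G.DW s l t ∧ P.edges = l.map (fun x => x.2.1) ∧
      P.edges.Nodup ∧ (∀ x ∈ l, x.2.2 ≠ s) ∧
      (∃ d z l', l = (s, d, z) :: l' ∧ d ∈ G.edgeCut {s}) ∧
      ∀ d ∈ G.edgeCut {s}, d ∈ P.edges → ∃ z l', l = (s, d, z) :: l' := by
  obtain ⟨h1, h2, -⟩ := hP
  have h1 : P.first = s := h1
  have h2 : P.last = t := h2
  obtain ⟨l, h3, h4, h5⟩ := walk_darts P.isWalk P.head_eq P.getLast_eq
  rw [h1, h2] at h3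
  rw [h1] at h5
  have hn := P.nodup
  rw [h5] at hn
  have hen := edges_nodup_of h3 hn
  have hns : ∀ x ∈ l, x.2.2 ≠ s := by
    intro x hx hxs
    exact (List.nodup_cons.1 hn).1 (List.mem_map.2 ⟨x, hx, hxs⟩)
  refine ⟨l, h3, h4, h4 ▸ hen, hns, ?_, ?_⟩
  · cases l with
    | nil => exact absurd h3 hst
    | cons x l =>
      obtain ⟨a, g, z⟩ := x
      obtain ⟨h6, h7, h8⟩ := h3
      simp only at h6 h7
      subst h6
      exact ⟨g, z, l, rfl, s, z, h7, rfl, fun h => hns (s, g, z) (by simp) h⟩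
  · intro d hd hdP
    cases l with
    | nil => exact absurd h3 hst
    | cons x l =>
      obtain ⟨a, g, z⟩ := x
      obtain ⟨h6, h7, h8⟩ := h3
      simp only at h6 h7 h8
      subst h6
      rw [h4] at hdP
      simp only [List.map_cons, List.mem_cons] at hdP
      rcases hdP with rfl | hdP
      · exact ⟨z, l, rfl⟩
      · exfalso
        obtain ⟨y, hy, hyd⟩ := List.mem_map.1 hdP
        have hyd : y.2.1 = d := hyd
        obtain ⟨u, w, hI, hu, hw⟩ := hd
        have hu : u = s := hu
        subst hu
        have hIy := DW_I h8 y hy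
        rw [hyd] at hIy
        have hzs : z ≠ u := hns (u, g, z) (by simp)
        rcases I_cases hIy hI with ⟨h, -⟩ | ⟨-, h⟩
        · rcases DW_src h8 y hy with h' | ⟨q, hq, h'⟩
          · exact hzs (by rw [← h', h])
          · exact hns q (by simp [hq]) (by rw [h', h])
        · exact hns y (by simp [hy]) h

/-- first exit from a vertex set -/
theorem DW_exit {G : Grapht V E} {X : Set V} {l : List (V × E × V)} {a b : V} (h : G.DW a l b)
    (ha : a ∈ X) (hb : b ∉ X) :
    ∃ l₁ u g w l₂, l = l₁ ++ (u, g, w) :: l₂ ∧ (∀ x ∈ l₁, x.1 ∈ X ∧ x.2.2 ∈ X) ∧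
      u ∈ X ∧ w ∉ X := by
  induction l generalizing a with
  | nil => exact absurd (h ▸ ha) hb
  | cons x l ih =>
    obtain ⟨h1, h2, h3⟩ := h
    by_cases hx : x.2.2 ∈ X
    · obtain ⟨l₁, u, g, w, l₂, h4, h5, h6, h7⟩ := ih h3 hx
      refine ⟨x :: l₁, u, g, w, l₂, by simp [h4], ?_, h6, h7⟩
      intro y hy
      rcases List.mem_cons.1 hy with rfl | hy
      · exact ⟨h1 ▸ ha, hx⟩
      · exact h5 y hy
    · exact ⟨[], x.1, x.2.1, x.2.2, l, rfl, by simp, h1 ▸ ha, hx⟩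

/-- if no dart enters `Y`, then starting outside one stays outside -/
theorem DW_outside {G : Grapht V E} {Y : Set V} {l : List (V × E × V)} {a b : V} (h : G.DW a l b)
    (ha : a ∉ Y) (hno : ∀ x ∈ l, x.2.2 ∈ Y → x.1 ∈ Y) :
    ∀ x ∈ l, x.1 ∉ Y ∧ x.2.2 ∉ Y := by
  induction l generalizing a with
  | nil => simp
  | cons x l ih =>
    obtain ⟨h1, h2, h3⟩ := h
    have hx : x.2.2 ∉ Y := fun hx => ha (h1 ▸ hno x (by simp) hx)
    intro y hy
    rcases List.mem_cons.1 hy with rfl | hy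
    · exact ⟨h1 ▸ ha, hx⟩
    · exact ih h3 hx (fun z hz => hno z (by simp [hz])) y hy

/-- families of edge-disjoint `st`-walks indexed by the edges at `s` -/
structure Fam (G : Grapht V E) (s t : V) (W : E → List (V × E × V)) : Prop where
  head : ∀ d ∈ G.edgeCut {s}, ∃ z l, W d = (s, d, z) :: l
  walk : ∀ d ∈ G.edgeCut {s}, G.DW s (W d) t
  disj : ∀ d ∈ G.edgeCut {s}, ∀ d' ∈ G.edgeCut {s}, d ≠ d' →
    ∀ x ∈ W d, ∀ y ∈ W d', x.2.1 ≠ y.2.1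
  nos : ∀ d ∈ G.edgeCut {s}, ∀ x ∈ W d, x.2.2 ≠ s

theorem Fam.paths {G : Grapht V E} {s t : V} {W : E → List (V × E × V)} (h : G.Fam s t W) :
    ∃ Ps : Set G.Path, G.IsStLinkage s t Ps ∧
      (∀ P ∈ Ps, ∃ d ∈ G.edgeCut {s}, ∃ l, l ⊆ W d ∧ G.DW s l t ∧
        P.edges = l.map (fun x => x.2.1)) ∧
      ∀ d ∈ G.edgeCut {s}, ∃ P ∈ Ps, ∃ l, l ⊆ W d ∧ G.DW s l t ∧
        P.edges = l.map (fun x => x.2.1) := by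
  have key : ∀ d : G.edgeCut {s}, ∃ P : G.Path, G.IsABPath {s} {t} P ∧ d.1 ∈ P.edges ∧
      ∃ l, l ⊆ W d.1 ∧ G.DW s l t ∧ P.edges = l.map (fun x => x.2.1) := by
    rintro ⟨d, hd⟩
    obtain ⟨z, l, hW⟩ := h.head d hd
    have hw := h.walk d hd
    have hnos := h.nos d hd
    rw [hW] at hw hnos
    obtain ⟨h1, h2, h3⟩ := hw
    obtain ⟨l', h4, h5, h6⟩ := DW_shorten h3
    have h7 : G.DW s ((s, d, z) :: l') t := ⟨rfl, h2, h5⟩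
    have h8 : (s, d, z) :: l' ⊆ (s, d, z) :: l := List.cons_subset_cons _ h4
    obtain ⟨P, hP, hPe⟩ := DW_path h7 (by
      rw [List.nodup_cons]
      refine ⟨?_, by simpa using h6⟩
      intro hmem
      obtain ⟨x, hx, hxs⟩ := List.mem_map.1 hmem
      exact hnos x (h8 hx) hxs)
    exact ⟨P, hP, by rw [hPe]; simp, _, by simpa [hW] using h8, h7, hPe⟩
  choose p hp hdp lp h1 h2 h3 using key
  refine ⟨Set.range p, ⟨?_, ?_, ?_⟩, ?_, ?_⟩
  · rintro _ ⟨d, rfl⟩ _ ⟨d', rfl⟩ hne g hg hg'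
    have hdd : d ≠ d' := fun hh => hne (by rw [hh])
    rw [h3] at hg hg'
    obtain ⟨x, hx, hxg⟩ := List.mem_map.1 hg
    obtain ⟨y, hy, hyg⟩ := List.mem_map.1 hg'
    exact h.disj d d.2 d' d'.2 (fun hh => hdd (Subtype.ext hh)) x (h1 d hx) y (h1 d' hy)
      (hxg.trans hyg.symm)
  · rintro _ ⟨d, rfl⟩
    exact hp d
  · intro d hd
    exact ⟨p ⟨d, hd⟩, ⟨_, rfl⟩, hdp ⟨d, hd⟩⟩
  · rintro _ ⟨d, rfl⟩
    exact ⟨d, d.2, lp d, h1 d, h2 d, h3 d⟩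
  · intro d hd
    exact ⟨p ⟨d, hd⟩, ⟨_, rfl⟩, lp ⟨d, hd⟩, h1 _, h2 _, h3 _⟩

/-- state of the augmentation: the walk of index `d0` ends at `x`, and `B` runs from `w` to `t` -/
structure St (G : Grapht V E) (s t w : V) (e : E) (B : List (V × E × V))
    (W : E → List (V × E × V)) (d0 : E) (x : V) : Prop where
  d0mem : d0 ∈ G.edgeCut {s}
  head : ∀ d ∈ G.edgeCut {s}, ∃ z l, W d = (s, d, z) :: l
  walk : ∀ d ∈ G.edgeCut {s}, d ≠ d0 → G.DW s (W d) t
  walk0 : G.DW s (W d0) x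
  walkB : G.DW w B t
  nodup : ∀ d ∈ G.edgeCut {s}, ((W d).map (fun x => x.2.1)).Nodup
  disj : ∀ d ∈ G.edgeCut {s}, ∀ d' ∈ G.edgeCut {s}, d ≠ d' →
    ∀ x ∈ W d, ∀ y ∈ W d', x.2.1 ≠ y.2.1
  disjB : ∀ d ∈ G.edgeCut {s}, ∀ x ∈ W d, ∀ y ∈ B, x.2.1 ≠ y.2.1
  nos : ∀ d ∈ G.edgeCut {s}, ∀ x ∈ W d, x.2.2 ≠ s
  nosB : ∀ x ∈ B, x.2.2 ≠ s
  noe : ∀ d ∈ G.edgeCut {s}, ∀ x ∈ W d, x.2.1 ≠ e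
  noeB : ∀ x ∈ B, x.2.1 ≠ e

/-- finishing an augmentation -/
theorem St.finish {G : Grapht V E} {s t w : V} {e : E} {B : List (V × E × V)}
    {W : E → List (V × E × V)} {d0 : E} {x : V} (h : G.St s t w e B W d0 x)
    {B' : List (V × E × V)} (hB' : B' ⊆ B) (hw : G.DW x B' t) :
    ∃ W', G.Fam s t W' ∧ ∀ d ∈ G.edgeCut {s}, ∀ x ∈ W' d, x.2.1 ≠ e := by
  classical
  have hmem : ∀ d y, y ∈ Function.update W d0 (W d0 ++ B') d → y ∈ W d ∨ (d = d0 ∧ y ∈ B) := by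
    intro d y hy
    by_cases hd : d = d0
    · subst hd
      simp only [Function.update_self, List.mem_append] at hy
      rcases hy with hy | hy
      · exact Or.inl hy
      · exact Or.inr ⟨rfl, hB' hy⟩
    · rw [Function.update_of_ne hd] at hy
      exact Or.inl hy
  refine ⟨Function.update W d0 (W d0 ++ B'), ⟨?_, ?_, ?_, ?_⟩, ?_⟩
  · intro d hd
    obtain ⟨z, l, hz⟩ := h.head d hd
    by_cases hdd : d = d0
    · subst hdd
      exact ⟨z, l ++ B', by simp [hz]⟩
    · exact ⟨z, l, by rw [Function.update_of_ne hdd, hz]⟩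
  · intro d hd
    by_cases hdd : d = d0
    · subst hdd
      rw [Function.update_self]
      exact DW_append.2 ⟨x, h.walk0, hw⟩
    · rw [Function.update_of_ne hdd]
      exact h.walk d hd hdd
  · intro d hd d' hd' hne y hy z hz
    rcases hmem d y hy with hy1 | ⟨h1, hy1⟩ <;> rcases hmem d' z hz with hz1 | ⟨h2, hz1⟩
    · exact h.disj d hd d' hd' hne y hy1 z hz1
    · exact h.disjB d hd y hy1 z hz1
    · exact (h.disjB d' hd' z hz1 y hy1).symm
    · exact absurd (h1.trans h2.symm) hne
  · intro d hd y hy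
    rcases hmem d y hy with hy1 | ⟨h1, hy1⟩
    · exact h.nos d hd y hy1
    · exact h.nosB y hy1
  · intro d hd y hy
    rcases hmem d y hy with hy1 | ⟨h1, hy1⟩
    · exact h.noe d hd y hy1
    · exact h.noeB y hy1

/-- residual steps -/
def Res (G : Grapht V E) (s : V) (e : E) (B : List (V × E × V))
    (W : E → List (V × E × V)) (x x' : V) : Prop :=
  x' ≠ s ∧ ∃ g, G.I g = s(x, x') ∧ g ≠ e ∧ (x, g, x') ∉ B ∧
    ∀ d ∈ G.edgeCut {s}, (x, g, x') ∉ W d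

theorem St.step {G : Grapht V E} {s t w : V} {e : E} {B : List (V × E × V)}
    {W : E → List (V × E × V)} {d0 : E} {x x' : V} (h : G.St s t w e B W d0 x)
    (hr : G.Res s e B W x x') :
    (∃ W', G.Fam s t W' ∧ ∀ d ∈ G.edgeCut {s}, ∀ x ∈ W' d, x.2.1 ≠ e) ∨
    ∃ W' d0', G.St s t w e B W' d0' x' ∧
      ∀ d ∈ G.edgeCut {s}, ∀ y ∈ W' d, y.1 = x ∨ ∃ d' ∈ G.edgeCut {s}, y ∈ W d' := by
  classical
  obtain ⟨hx's, g, hI, hge, hgB, hgW⟩ := hr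
  by_cases hB : ∃ y ∈ B, y.2.1 = g
  · left
    obtain ⟨⟨a, g', b⟩, hy, hyg⟩ := hB
    simp only at hyg
    subst hyg
    have hIy := DW_I h.walkB _ hy
    rcases I_cases hIy hI with ⟨h1, h2⟩ | ⟨h1, h2⟩
    · simp only at h1 h2
      subst h1 h2
      exact absurd hy hgB
    · simp only at h1 h2
      subst h1 h2
      obtain ⟨B₁, B₂, hBB⟩ := List.append_of_mem hy
      have hwB := h.walkB
      rw [hBB] at hwB
      obtain ⟨c, -, hc⟩ := DW_append.1 hwB
      exact h.finish (B' := B₂) (by rw [hBB]; simp) hc.2.2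
  · right
    by_cases hW : ∃ d ∈ G.edgeCut {s}, ∃ y ∈ W d, y.2.1 = g
    · obtain ⟨i, hi, ⟨a, g', b⟩, hy, hyg⟩ := hW
      simp only at hyg
      subst hyg
      have hwi : ∃ q, G.DW s (W i) q ∧ (i ≠ d0 → q = t) := by
        by_cases hid : i = d0
        · subst hid
          exact ⟨x, h.walk0, fun hh => absurd rfl hh⟩
        · exact ⟨t, h.walk i hi hid, fun _ => rfl⟩
      obtain ⟨q, hwi, hq⟩ := hwi
      have hIy := DW_I hwi _ hy
      rcases I_cases hIy hI with ⟨h1, h2⟩ | ⟨h1, h2⟩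
      · simp only at h1 h2
        subst h1 h2
        exact absurd hy (hgW i hi)
      simp only at h1 h2
      subst h1 h2
      obtain ⟨l₁, l₂, hll⟩ := List.append_of_mem hy
      have hwi' := hwi
      rw [hll] at hwi'
      obtain ⟨c, hc1, hc2⟩ := DW_append.1 hwi'
      obtain ⟨hc3, -, hc4⟩ := hc2
      simp only at hc3 hc4
      subst hc3
      have hl1 : ∃ z l, l₁ = (s, i, z) :: l := by
        obtain ⟨z, l, hz⟩ := h.head i hi
        cases l₁ with
        | nil => exact absurd (Eq.symm hc1) hx's
        | cons y l₁ =>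
          rw [hll] at hz
          simp only [List.cons_append, List.cons.injEq] at hz
          exact ⟨z, l₁, by rw [hz.1]⟩
      have hsub1 : l₁ ⊆ W i := by rw [hll]; simp
      have hsub2 : l₂ ⊆ W i := by rw [hll]; simp
      have hnd := h.nodup i hi
      rw [hll, List.map_append, List.map_cons, List.nodup_append, List.nodup_cons] at hnd
      by_cases hid : i = d0
      · subst hid
        have hmem : ∀ d y, y ∈ Function.update W i l₁ d → y ∈ W d := by
          intro d y hy
          by_cases hd : d = i
          · subst hd
            rw [Function.update_self] at hy
            exact hsub1 hy
          · rwa [Function.update_of_ne hd] at hy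
        refine ⟨Function.update W i l₁, i, ⟨hi, ?_, ?_, ?_, h.walkB, ?_, ?_, ?_, ?_, h.nosB, ?_, h.noeB⟩, ?_⟩
        · intro d hd
          by_cases hdi : d = i
          · subst hdi
            rw [Function.update_self]
            exact hl1
          · rw [Function.update_of_ne hdi]
            exact h.head d hd
        · intro d hd hdi
          rw [Function.update_of_ne hdi]
          exact h.walk d hd hdi
        · rw [Function.update_self]
          exact hc1
        · intro d hd
          by_cases hdi : d = i
          · subst hdi
            rw [Function.update_self]
            exact hnd.1
          · rw [Function.update_of_ne hdi]
            exact h.nodup d hd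
        · intro d hd d' hd' hne y hy z hz
          exact h.disj d hd d' hd' hne y (hmem _ _ hy) z (hmem _ _ hz)
        · intro d hd y hy z hz
          exact h.disjB d hd y (hmem _ _ hy) z hz
        · intro d hd y hy
          exact h.nos d hd y (hmem _ _ hy)
        · intro d hd y hy
          exact h.noe d hd y (hmem _ _ hy)
        · intro d hd y hy
          exact Or.inr ⟨d, hd, hmem _ _ hy⟩
      · have hq := hq hid
        subst hq
        set W' := Function.update (Function.update W d0 (W d0 ++ l₂)) i l₁ with hW'
        have hWi : W' i = l₁ := by simp [hW']
        have hW0 : W' d0 = W d0 ++ l₂ := by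
          rw [hW', Function.update_of_ne (Ne.symm hid), Function.update_self]
        have hWo : ∀ d, d ≠ i → d ≠ d0 → W' d = W d := by
          intro d h1 h2
          rw [hW', Function.update_of_ne h1, Function.update_of_ne h2]
        have hmem : ∀ d y, y ∈ W' d → (y ∈ W d ∧ (d = i → y ∈ l₁)) ∨ (d = d0 ∧ y ∈ l₂) := by
          intro d y hy
          by_cases hd : d = i
          · subst hd
            rw [hWi] at hy
            exact Or.inl ⟨hsub1 hy, fun _ => hy⟩
          · by_cases hd0 : d = d0
            · subst hd0
              rw [hW0, List.mem_append] at hy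
              rcases hy with hy | hy
              · exact Or.inl ⟨hy, fun hh => absurd hh hd⟩
              · exact Or.inr ⟨rfl, hy⟩
            · rw [hWo d hd hd0] at hy
              exact Or.inl ⟨hy, fun hh => absurd hh hd⟩
        have hmem' : ∀ d ∈ G.edgeCut {s}, ∀ y ∈ W' d, ∃ d' ∈ G.edgeCut {s}, y ∈ W d' := by
          intro d hd y hy
          rcases hmem d y hy with ⟨hy, -⟩ | ⟨-, hy⟩
          · exact ⟨d, hd, hy⟩
          · exact ⟨i, hi, hsub2 hy⟩
        have h12 : ∀ y ∈ l₁, ∀ z ∈ l₂, y.2.1 ≠ z.2.1 := by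
          intro y hy z hz
          exact hnd.2.2 _ (List.mem_map.2 ⟨y, hy, rfl⟩) _
            (List.mem_cons_of_mem _ (List.mem_map.2 ⟨z, hz, rfl⟩))
        refine ⟨W', i, ⟨hi, ?_, ?_, ?_, h.walkB, ?_, ?_, ?_, ?_, h.nosB, ?_, h.noeB⟩, ?_⟩
        · intro d hd
          by_cases hdi : d = i
          · subst hdi
            rw [hWi]
            exact hl1
          · by_cases hd0 : d = d0
            · subst hd0
              obtain ⟨z, l, hz⟩ := h.head d hd
              exact ⟨z, l ++ l₂, by rw [hW0, hz]; rfl⟩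
            · rw [hWo d hdi hd0]
              exact h.head d hd
        · intro d hd hdi
          by_cases hd0 : d = d0
          · subst hd0
            rw [hW0]
            exact DW_append.2 ⟨_, h.walk0, hc4⟩
          · rw [hWo d hdi hd0]
            exact h.walk d hd hd0
        · rw [hWi]
          exact hc1
        · intro d hd
          by_cases hdi : d = i
          · subst hdi
            rw [hWi]
            exact hnd.1
          · by_cases hd0 : d = d0
            · subst hd0
              rw [hW0, List.map_append, List.nodup_append]
              refine ⟨h.nodup d hd, hnd.2.1.2, ?_⟩
              intro p hp r hr
              obtain ⟨y, hy, rfl⟩ := List.mem_map.1 hp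
              obtain ⟨z, hz, rfl⟩ := List.mem_map.1 hr
              exact h.disj d hd i hi hdi y hy z (hsub2 hz)
            · rw [hWo d hdi hd0]
              exact h.nodup d hd
        · intro d hd d' hd' hne y hy z hz
          rcases hmem d y hy with ⟨hy, hyi⟩ | ⟨h1, hy⟩ <;>
            rcases hmem d' z hz with ⟨hz, hzi⟩ | ⟨h2, hz⟩
          · exact h.disj d hd d' hd' hne y hy z hz
          · by_cases hdi : d = i
            · exact h12 y (hyi hdi) z hz
            · exact h.disj d hd i hi hdi y hy z (hsub2 hz)
          · by_cases hdi : d' = i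
            · exact (h12 z (hzi hdi) y hy).symm
            · exact h.disj i hi d' hd' (Ne.symm hdi) y (hsub2 hy) z hz
          · exact absurd (h1.trans h2.symm) hne
        · intro d hd y hy z hz
          obtain ⟨d', hd', hy'⟩ := hmem' d hd y hy
          exact h.disjB d' hd' y hy' z hz
        · intro d hd y hy
          obtain ⟨d', hd', hy'⟩ := hmem' d hd y hy
          exact h.nos d' hd' y hy'
        · intro d hd y hy
          obtain ⟨d', hd', hy'⟩ := hmem' d hd y hy
          exact h.noe d' hd' y hy'
        · intro d hd y hy
          exact Or.inr (hmem' d hd y hy)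
    · push Not at hW hB
      set W' := Function.update W d0 (W d0 ++ [(x, g, x')]) with hW'
      have hW0 : W' d0 = W d0 ++ [(x, g, x')] := by simp [hW']
      have hWo : ∀ d, d ≠ d0 → W' d = W d := by
        intro d h2
        rw [hW', Function.update_of_ne h2]
      have hmem : ∀ d y, y ∈ W' d → y ∈ W d ∨ (d = d0 ∧ y = (x, g, x')) := by
        intro d y hy
        by_cases hd : d = d0
        · subst hd
          rw [hW0, List.mem_append, List.mem_singleton] at hy
          exact hy.imp id (fun hh => ⟨rfl, hh⟩)
        · rw [hWo d hd] at hy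
          exact Or.inl hy
      refine ⟨W', d0, ⟨h.d0mem, ?_, ?_, ?_, h.walkB, ?_, ?_, ?_, ?_, h.nosB, ?_, h.noeB⟩, ?_⟩
      · intro d hd
        obtain ⟨z, l, hz⟩ := h.head d hd
        by_cases hd0 : d = d0
        · subst hd0
          exact ⟨z, l ++ [(x, g, x')], by rw [hW0, hz]; rfl⟩
        · exact ⟨z, l, by rw [hWo d hd0, hz]⟩
      · intro d hd hd0
        rw [hWo d hd0]
        exact h.walk d hd hd0
      · rw [hW0]
        exact DW_append.2 ⟨x, h.walk0, rfl, hI, rfl⟩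
      · intro d hd
        by_cases hd0 : d = d0
        · subst hd0
          rw [hW0, List.map_append, List.nodup_append]
          refine ⟨h.nodup d hd, by simp, ?_⟩
          intro p hp r hr
          obtain ⟨y, hy, rfl⟩ := List.mem_map.1 hp
          simp only [List.map_cons, List.map_nil, List.mem_singleton] at hr
          rw [hr]
          exact hW d hd y hy
        · rw [hWo d hd0]
          exact h.nodup d hd
      · intro d hd d' hd' hne y hy z hz
        rcases hmem d y hy with hy | ⟨h1, rfl⟩ <;> rcases hmem d' z hz with hz | ⟨h2, rfl⟩
        · exact h.disj d hd d' hd' hne y hy z hz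
        · exact hW d hd y hy
        · exact (hW d' hd' z hz).symm
        · exact absurd (h1.trans h2.symm) hne
      · intro d hd y hy z hz
        rcases hmem d y hy with hy | ⟨h1, rfl⟩
        · exact h.disjB d hd y hy z hz
        · exact (hB z hz).symm
      · intro d hd y hy
        rcases hmem d y hy with hy | ⟨h1, rfl⟩
        · exact h.nos d hd y hy
        · exact hx's
      · intro d hd y hy
        rcases hmem d y hy with hy | ⟨h1, rfl⟩
        · exact h.noe d hd y hy
        · exact hge
      · intro d hd y hy
        rcases hmem d y hy with hy | ⟨h1, rfl⟩
        · exact Or.inr ⟨d, hd, hy⟩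
        · exact Or.inl rfl

/-- chains of a relation, as an inductive on lists -/
def Ch {α : Type*} (r : α → α → Prop) : α → List α → α → Prop
  | a, [], b => a = b
  | a, c :: l, b => r a c ∧ Ch r c l b

theorem Ch_suffix {α : Type*} {r : α → α → Prop} {l : List α} {a b c : α} (h : Ch r a l b)
    (hc : c ∈ a :: l) (hn : (a :: l).Nodup) : ∃ l', Ch r c l' b ∧ (c :: l').Nodup := by
  induction l generalizing a with
  | nil =>
    simp at hc
    subst hc
    exact ⟨[], h, by simp⟩
  | cons x l ih =>
    rcases List.mem_cons.1 hc with rfl | hc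
    · exact ⟨_, h, hn⟩
    · exact ih h.2 hc (List.nodup_cons.1 hn).2

theorem Ch_of_refl {α : Type*} {r : α → α → Prop} {a b : α} (h : Relation.ReflTransGen r a b) :
    ∃ l, Ch r a l b ∧ (a :: l).Nodup := by
  induction h using Relation.ReflTransGen.head_induction_on with
  | refl => exact ⟨[], rfl, by simp⟩
  | @head a c hac _ ih =>
    obtain ⟨l, h1, h2⟩ := ih
    by_cases hm : a ∈ c :: l
    · exact Ch_suffix h1 hm h2
    · exact ⟨c :: l, ⟨hac, h1⟩, List.nodup_cons.2 ⟨hm, h2⟩⟩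

theorem Ch_mono {α : Type*} {r r' : α → α → Prop} {x : α} (hr : ∀ y z, y ≠ x → r y z → r' y z)
    {l : List α} {a b : α} (h : Ch r a l b) (hx : x ∉ a :: l) : Ch r' a l b := by
  induction l generalizing a with
  | nil => exact h
  | cons c l ih =>
    refine ⟨hr a c ?_ h.1, ih h.2 ?_⟩
    · rintro rfl
      simp at hx
    · intro hh
      exact hx (List.mem_cons_of_mem _ hh)

theorem St.augment {G : Grapht V E} {s t w : V} {e : E} {B : List (V × E × V)}
    {W : E → List (V × E × V)} {d0 : E} {x : V} (h : G.St s t w e B W d0 x) {l : List V}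
    (hl : Ch (G.Res s e B W) x l w) (hn : (x :: l).Nodup) :
    ∃ W', G.Fam s t W' ∧ ∀ d ∈ G.edgeCut {s}, ∀ x ∈ W' d, x.2.1 ≠ e := by
  induction l generalizing W d0 x with
  | nil =>
    have : x = w := hl
    subst this
    exact h.finish (List.Subset.refl _) h.walkB
  | cons x' l ih =>
    rcases h.step hl.1 with hh | ⟨W', d0', h', hsub⟩
    · exact hh
    · refine ih h' (Ch_mono (x := x) ?_ hl.2 (List.nodup_cons.1 hn).1) (List.nodup_cons.1 hn).2
      rintro y z hyx ⟨h1, g, h2, h3, h4, h5⟩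
      refine ⟨h1, g, h2, h3, h4, ?_⟩
      intro d hd hmem
      rcases hsub d hd _ hmem with hh | ⟨d', hd', hh⟩
      · exact hyx hh
      · exact h5 d' hd' hh

end Grapht

/-- **Tight cut lemma.** If `s` is linked, every linkage of `s` uses the edge
`e ∉ δ(s)`, and `C` is the `⊴`-smallest Erdős–Menger `st`-cut containing `e`, then `C`
is tight: every linkage of `s` is orthogonal to `C`. -/
theorem tight_cut {V : Type u} {E : Type v} (G : Grapht V E) (s t : V) (hst : s ≠ t)
    (hT : G.T = {s, t}) (hs : G.StLinked s t) (e : E) (he : e ∉ G.edgeCut {s})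
    (huses : ∀ Ps : Set G.Path, G.IsStLinkage s t Ps → ∃ P ∈ Ps, e ∈ P.edges)
    (C : Set E) (hC : G.IsEMABCut {s} {t} C) (heC : e ∈ C)
    (hmin : ∀ C' : Set E, G.IsEMABCut {s} {t} C' → e ∈ C' → G.ABCutLE {s} {t} C C')
    (Qs : Set G.Path) (hQs : G.IsStLinkage s t Qs) :
    G.Orthogonal C Qs := by
  classical
  obtain ⟨hcut, Ps, hPd, hPst, hPo⟩ := hC
  obtain ⟨hQd, hQst, hQcov⟩ := hQs
  haveI : Nonempty V := ⟨s⟩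
  haveI : Nonempty E := ⟨e⟩
  haveI : Nonempty G.Path := ⟨(hPo.2 e heC).choose⟩
  -- the source side of `C`
  set X : Set V := {x | ∃ l, G.DW s l x ∧ ∀ y ∈ l, y.2.1 ∉ C} with hX
  have hsX : s ∈ X := ⟨[], rfl, by simp⟩
  have hX2 : ∀ g a b, G.I g = s(a, b) → a ∈ X → b ∉ X → g ∈ C := by
    intro g a b hI ⟨l, hl1, hl2⟩ hb
    by_contra hg
    refine hb ⟨l ++ [(a, g, b)], Grapht.DW_append.2 ⟨a, hl1, rfl, hI, rfl⟩, ?_⟩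
    intro y hy
    rcases List.mem_append.1 hy with hy | hy
    · exact hl2 y hy
    · rw [List.mem_singleton.1 hy]
      exact hg
  have htX : t ∉ X := by
    rintro ⟨l, hl1, hl2⟩
    obtain ⟨l', h1, h2, h3⟩ := Grapht.DW_shorten hl1
    obtain ⟨P, hP, hPe⟩ := Grapht.DW_path h2 h3
    obtain ⟨c, hc, hcP⟩ := hcut P hP
    rw [hPe] at hcP
    obtain ⟨y, hy, hyc⟩ := List.mem_map.1 hcP
    exact hl2 y (h1 hy) (hyc ▸ hc)
  have hXback : ∀ (l : List (V × E × V)) a, G.DW a l t → (∀ y ∈ l, y.2.1 ∉ C) →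
      a ∉ X ∧ ∀ y ∈ l, y.1 ∉ X ∧ y.2.2 ∉ X := by
    intro l
    induction l with
    | nil =>
      intro a ha _
      have : a = t := ha
      subst this
      exact ⟨htX, by simp⟩
    | cons x l ih =>
      intro a ha hl
      obtain ⟨h1, h2, h3⟩ := ha
      obtain ⟨h4, h5⟩ := ih _ h3 (fun y hy => hl y (by simp [hy]))
      have haX : a ∉ X := by
        intro haX
        exact hl x (by simp) (hX2 _ _ _ h2 (h1 ▸ haX) h4)
      refine ⟨haX, ?_⟩
      intro y hy
      rcases List.mem_cons.1 hy with rfl | hy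
      · exact ⟨h1 ▸ haX, h4⟩
      · exact h5 y hy
  -- structure of the orthogonal path system along `C`
  have hCdata : ∀ c : E, c ∈ C → ∃ P ∈ Ps, ∃ p₁ a b p₂,
      P.edges = (p₁ ++ (a, c, b) :: p₂).map (fun x => x.2.1) ∧
      G.DW s p₁ a ∧ G.DW b p₂ t ∧ G.I c = s(a, b) ∧ a ∈ X ∧ b ∉ X ∧
      (∀ y ∈ p₁, y.2.1 ∉ C) ∧ (∀ y ∈ p₂, y.2.1 ∉ C) ∧ (∀ y ∈ p₂, y.1 ∉ X ∧ y.2.2 ∉ X) ∧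
      (p₂.map (fun x => x.2.1)).Nodup := by
    intro c hc
    obtain ⟨P, hP, hcP⟩ := hPo.2 c hc
    obtain ⟨l, h1, h2, h3, -⟩ := Grapht.path_darts hst P (hPst P hP)
    have hcP' := hcP
    rw [h2] at hcP'
    obtain ⟨⟨a, c', b⟩, hy, hyc⟩ := List.mem_map.1 hcP'
    simp only at hyc
    subst hyc
    obtain ⟨p₁, p₂, hll⟩ := List.append_of_mem hy
    subst hll
    obtain ⟨a', h4, h5, h6, h7⟩ := Grapht.DW_append.1 h1
    simp only at h5 h6 h7
    subst h5
    have huniq : ∀ g, g ∈ C → g ∈ P.edges → g = c' := fun g hg hgP =>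
      (hPo.1 P hP).unique ⟨hg, hgP⟩ ⟨hc, hcP⟩
    rw [h2, List.map_append, List.map_cons, List.nodup_append, List.nodup_cons] at h3
    have hp1 : ∀ y ∈ p₁, y.2.1 ∉ C := by
      intro y hy' hyC
      have hm : y.2.1 ∈ p₁.map (fun x => x.2.1) := List.mem_map.2 ⟨y, hy', rfl⟩
      have := huniq y.2.1 hyC (by rw [h2, List.map_append]; exact List.mem_append_left _ hm)
      exact h3.2.2 _ hm c' (by simp) this
    have hp2 : ∀ y ∈ p₂, y.2.1 ∉ C := by
      intro y hy' hyC
      have hm : y.2.1 ∈ p₂.map (fun x => x.2.1) := List.mem_map.2 ⟨y, hy', rfl⟩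
      have := huniq y.2.1 hyC (by
        rw [h2, List.map_append]
        exact List.mem_append_right _ (List.mem_cons_of_mem _ hm))
      exact h3.2.1.1 (this ▸ hm)
    obtain ⟨h8, h9⟩ := hXback p₂ b h7 hp2
    exact ⟨P, hP, p₁, a', b, p₂, h2, h4, h7, h6, ⟨p₁, h4, hp1⟩, h8, hp1, hp2, h9, h3.2.1.2⟩
  choose! pP hpP p1 pa pb p2 hpe hpw1 hpw2 hpI hpa hpb hp1 hp2 hp2X hp2n using hCdata
  have hCend : ∀ c ∈ C, ∀ a b, G.I c = s(a, b) → a ∈ X → a = pa c ∧ b = pb c := by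
    intro c hc a b hI ha
    rcases Grapht.I_cases hI (hpI c hc) with h | ⟨h, -⟩
    · exact h
    · exact absurd (h ▸ ha) (hpb c hc)
  have hCout : ∀ c ∈ C, ∀ a b, G.I c = s(a, b) → a ∈ X → b ∉ X := by
    intro c hc a b hI ha
    rw [(hCend c hc a b hI ha).2]
    exact hpb c hc
  have hp2disj : ∀ c ∈ C, ∀ c' ∈ C, c ≠ c' → ∀ y ∈ p2 c, ∀ z ∈ p2 c', y.2.1 ≠ z.2.1 := by
    intro c hc c' hc' hne y hy z hz hyz
    have hPne : pP c ≠ pP c' := by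
      intro hPP
      refine hne ((hPo.1 (pP c) (hpP c hc)).unique ⟨hc, ?_⟩ ⟨hc', ?_⟩)
      · rw [hpe c hc]; simp
      · rw [hPP, hpe c' hc']; simp
    refine hPd (hpP c hc) (hpP c' hc') hPne y.2.1 ?_ ?_
    · rw [hpe c hc]
      exact List.mem_map.2 ⟨y, by simp [hy], rfl⟩
    · rw [hyz, hpe c' hc']
      exact List.mem_map.2 ⟨z, by simp [hz], rfl⟩
  -- the heads of the linkage
  have hQdata : ∀ d : E, d ∈ G.edgeCut {s} → ∃ Q ∈ Qs, d ∈ Q.edges ∧ ∃ h c l,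
      Q.edges = (h ++ (pa c, c, pb c) :: l).map (fun x => x.2.1) ∧ c ∈ C ∧
      G.DW s h (pa c) ∧ (∀ y ∈ h, y.1 ∈ X ∧ y.2.2 ∈ X ∧ y.2.1 ∉ C) ∧
      (∃ z l', h ++ (pa c, c, pb c) :: l = (s, d, z) :: l') ∧
      (h.map (fun x => x.2.1)).Nodup ∧ ∀ y ∈ h, y.2.2 ≠ s := by
    intro d hd
    obtain ⟨Q, hQ, hdQ⟩ := hQcov d hd
    obtain ⟨l, h1, h2, h3, h4, -, h5⟩ := Grapht.path_darts hst Q (hQst Q hQ)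
    obtain ⟨h, a, c, b, l', hl, hin, ha, hb⟩ := Grapht.DW_exit h1 hsX htX
    subst hl
    obtain ⟨a', h6, h7, h8, h9⟩ := Grapht.DW_append.1 h1
    simp only at h7 h8 h9
    subst h7
    have hc : c ∈ C := hX2 c _ _ h8 ha hb
    obtain ⟨ea, eb⟩ := hCend c hc _ _ h8 ha
    subst ea eb
    refine ⟨Q, hQ, hdQ, h, c, l', h2, hc, h6, ?_, h5 d hd hdQ, ?_, ?_⟩
    · intro y hy
      refine ⟨(hin y hy).1, (hin y hy).2, fun hyC => ?_⟩
      exact hCout _ hyC _ _ (Grapht.DW_I h6 y hy) (hin y hy).1 (hin y hy).2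
    · rw [h2, List.map_append, List.nodup_append] at h3
      exact h3.1
    · intro y hy
      exact h4 y (by simp [hy])
  choose! Q hQ hdQ hh cc ll hQe hcC hhw hhX hhead hhn hhs using hQdata
  have hQne : ∀ d ∈ G.edgeCut {s}, ∀ d' ∈ G.edgeCut {s}, Q d = Q d' → d = d' := by
    intro d hd d' hd' hQQ
    obtain ⟨z, l, h1⟩ := hhead d hd
    obtain ⟨z', l', h1'⟩ := hhead d' hd'
    have h2 := hQe d hd
    have h2' := hQe d' hd'
    rw [hQQ, h2', h1, h1'] at h2
    simp only [List.map_cons, List.cons.injEq] at h2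
    exact h2.1.symm
  have hccQ : ∀ d ∈ G.edgeCut {s}, cc d ∈ (Q d).edges := by
    intro d hd
    rw [hQe d hd]
    simp
  by_contra hno
  have hf : ∃ f ∈ C, ∀ d ∈ G.edgeCut {s}, cc d ≠ f := by
    by_contra hall
    push Not at hall
    refine hno ⟨?_, ?_⟩
    · intro P hP
      obtain ⟨l, h1, h2, h3, h4, ⟨d, z, l', h5, hd⟩, -⟩ := Grapht.path_darts hst P (hQst P hP)
      have hPQ : ∀ d ∈ G.edgeCut {s}, ∀ g, g ∈ P.edges → g ∈ (Q d).edges → P = Q d := by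
        intro d hd g hg hg'
        by_contra hne
        exact hQd hP (hQ d hd) hne g hg hg'
      have hPd' : P = Q d := hPQ d hd d (by rw [h2, h5]; simp) (hdQ d hd)
      refine ⟨cc d, ⟨hcC d hd, hPd' ▸ hccQ d hd⟩, ?_⟩
      rintro g ⟨hgC, hgP⟩
      obtain ⟨d', hd', rfl⟩ := hall g hgC
      have := hPQ d' hd' _ hgP (hccQ d' hd')
      rw [hQne d hd d' hd' (hPd'.symm.trans this)]
    · intro g hg
      obtain ⟨d, hd, rfl⟩ := hall g hg
      exact ⟨Q d, hQ d hd, hccQ d hd⟩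
  obtain ⟨f, hfC, hfcc⟩ := hf
  -- the modified linkage
  set W : E → List (V × E × V) := fun d => hh d ++ (pa (cc d), cc d, pb (cc d)) :: p2 (cc d) with hW
  have hWmem : ∀ d y, y ∈ W d ↔
      y ∈ hh d ∨ y = (pa (cc d), cc d, pb (cc d)) ∨ y ∈ p2 (cc d) := by
    intro d y
    simp [hW]
  have hccne : ∀ d ∈ G.edgeCut {s}, ∀ d' ∈ G.edgeCut {s}, d ≠ d' → cc d ≠ cc d' := by
    intro d hd d' hd' hne hcc
    have hQ' : Q d ≠ Q d' := fun h => hne (hQne d hd d' hd' h)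
    exact hQd (hQ d hd) (hQ d' hd') hQ' (cc d) (hccQ d hd) (hcc ▸ hccQ d' hd')
  have hsep : ∀ d ∈ G.edgeCut {s}, ∀ c ∈ C, ∀ y ∈ hh d, ∀ z ∈ p2 c, y.2.1 ≠ z.2.1 := by
    intro d hd c hc y hy z hz hyz
    have h1 := Grapht.DW_I (hhw d hd) y hy
    have h2 := Grapht.DW_I (hpw2 c hc) z hz
    rw [hyz] at h1
    rcases Grapht.I_cases h1 h2 with ⟨h, -⟩ | ⟨h, -⟩
    · exact (hp2X c hc z hz).1 (h ▸ (hhX d hd y hy).1)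
    · exact (hp2X c hc z hz).2 (h ▸ (hhX d hd y hy).1)
  have hWC : ∀ d ∈ G.edgeCut {s}, ∀ y ∈ W d, y.2.1 ∈ C →
      y = (pa (cc d), cc d, pb (cc d)) := by
    intro d hd y hy hyC
    rcases (hWmem d y).1 hy with h | h | h
    · exact absurd hyC (hhX d hd y h).2.2
    · exact h
    · exact absurd hyC (hp2 _ (hcC d hd) y h)
  have hWn : ∀ d ∈ G.edgeCut {s}, ((W d).map (fun x => x.2.1)).Nodup := by
    intro d hd
    simp only [hW, List.map_append, List.map_cons]
    rw [List.nodup_append, List.nodup_cons]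
    refine ⟨hhn d hd, ⟨?_, hp2n _ (hcC d hd)⟩, ?_⟩
    · intro hm
      obtain ⟨y, hy, hyc⟩ := List.mem_map.1 hm
      exact hp2 _ (hcC d hd) y hy (by rw [hyc]; exact hcC d hd)
    · intro p hp q hq
      obtain ⟨y, hy, rfl⟩ := List.mem_map.1 hp
      rcases List.mem_cons.1 hq with rfl | hq
      · intro hyc
        exact (hhX d hd y hy).2.2 (by rw [hyc]; exact hcC d hd)
      · obtain ⟨z, hz, rfl⟩ := List.mem_map.1 hq
        exact hsep d hd _ (hcC d hd) y hy z hz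
  have hFam : G.Fam s t W := by
    refine ⟨?_, ?_, ?_, ?_⟩
    · intro d hd
      obtain ⟨z, l', h1⟩ := hhead d hd
      cases hc : hh d with
      | nil =>
        rw [hc] at h1
        simp only [List.nil_append, List.cons.injEq] at h1
        exact ⟨z, p2 (cc d), by simp [hW, hc, h1.1]⟩
      | cons y r =>
        rw [hc] at h1
        simp only [List.cons_append, List.cons.injEq] at h1
        exact ⟨z, r ++ (pa (cc d), cc d, pb (cc d)) :: p2 (cc d), by simp [hW, hc, h1.1]⟩
    · intro d hd
      exact Grapht.DW_append.2 ⟨_, hhw d hd, rfl, hpI _ (hcC d hd), hpw2 _ (hcC d hd)⟩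
    · intro d hd d' hd' hne y hy z hz hyz
      have hQ' : Q d ≠ Q d' := fun h => hne (hQne d hd d' hd' h)
      have hcne := hccne d hd d' hd' hne
      by_cases hyC : y.2.1 ∈ C
      · have h1 := hWC d hd y hy hyC
        have h2 := hWC d' hd' z hz (hyz ▸ hyC)
        rw [h1, h2] at hyz
        exact hcne hyz
      · have hzC : z.2.1 ∉ C := hyz ▸ hyC
        rcases (hWmem d y).1 hy with h | h | h
        · rcases (hWmem d' z).1 hz with h' | h' | h'
          · refine hQd (hQ d hd) (hQ d' hd') hQ' y.2.1 ?_ ?_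
            · rw [hQe d hd]
              exact List.mem_map.2 ⟨y, by simp [h], rfl⟩
            · rw [hyz, hQe d' hd']
              exact List.mem_map.2 ⟨z, by simp [h'], rfl⟩
          · exact hzC (by rw [h']; exact hcC d' hd')
          · exact hsep d hd _ (hcC d' hd') y h z h' hyz
        · exact hyC (by rw [h]; exact hcC d hd)
        · rcases (hWmem d' z).1 hz with h' | h' | h'
          · exact hsep d' hd' _ (hcC d hd) z h' y h hyz.symm
          · exact hzC (by rw [h']; exact hcC d' hd')
          · exact hp2disj _ (hcC d hd) _ (hcC d' hd') hcne y h z h' hyz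
    · intro d hd y hy
      rcases (hWmem d y).1 hy with h | h | h
      · exact hhs d hd y h
      · rw [h]
        intro hs'
        exact hpb _ (hcC d hd) (by rw [show pb (cc d) = s from hs']; exact hsX)
      · intro hs'
        exact (hp2X _ (hcC d hd) y h).2 (hs' ▸ hsX)
  -- `e` is used by `W`
  obtain ⟨Ls, hLs, hLs1, hLs2⟩ := hFam.paths
  have hed : ∃ d0 ∈ G.edgeCut {s}, cc d0 = e := by
    obtain ⟨P, hP, heP⟩ := huses Ls hLs
    obtain ⟨d, hd, l, h1, h2, h3⟩ := hLs1 P hP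
    rw [h3] at heP
    obtain ⟨y, hy, hye⟩ := List.mem_map.1 heP
    have hye : y.2.1 = e := hye
    have := hWC d hd y (h1 hy) (hye ▸ heC)
    rw [this] at hye
    exact ⟨d, hd, hye⟩
  obtain ⟨d0, hd0, hcd0⟩ := hed
  have hvs : pa e ≠ s := by
    intro h
    refine he ⟨s, pb e, h ▸ hpI e heC, rfl, ?_⟩
    intro h'
    exact hpb e heC ((show pb e = s from h') ▸ hsX)
  set r : V → V → Prop := fun x x' => x' ≠ s ∧ ∃ g, G.I g = s(x, x') ∧ g ≠ e ∧
    ∀ d ∈ G.edgeCut {s}, (x, g, x') ∉ W d with hr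
  set R : Set V := {x | Relation.ReflTransGen r (pa e) x} with hR
  have hvR : pa e ∈ R := Relation.ReflTransGen.refl
  have hRstep : ∀ x x', x ∈ R → r x x' → x' ∈ R := fun x x' hx hxx => Relation.ReflTransGen.tail hx hxx
  -- augmentation
  have hwR : pb e ∉ R := by
    intro hw
    obtain ⟨l, hl1, hl2⟩ := Grapht.Ch_of_refl hw
    set W0 := Function.update W d0 (hh d0) with hW0
    have hsub : ∀ d ∈ G.edgeCut {s}, ∀ y ∈ W0 d, y ∈ W d ∧ y.2.1 ≠ e := by
      intro d hd y hy
      by_cases hdd : d = d0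
      · subst hdd
        rw [hW0, Function.update_self] at hy
        refine ⟨(hWmem d y).2 (Or.inl hy), fun hye => ?_⟩
        exact (hhX d hd y hy).2.2 (hye ▸ heC)
      · rw [hW0, Function.update_of_ne hdd] at hy
        refine ⟨hy, fun hye => ?_⟩
        have := hWC d hd y hy (hye ▸ heC)
        rw [this] at hye
        exact hccne d hd d0 hd0 hdd (hye.trans hcd0.symm)
    have hBW : ∀ y ∈ p2 e, y ∈ W d0 := by
      intro y hy
      exact (hWmem d0 y).2 (Or.inr (Or.inr (by rw [hcd0]; exact hy)))
    have hSt : G.St s t (pb e) e (p2 e) W0 d0 (pa e) := by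
      refine ⟨hd0, ?_, ?_, ?_, hpw2 e heC, ?_, ?_, ?_, ?_, ?_, ?_, ?_⟩
      · intro d hd
        by_cases hdd : d = d0
        · subst hdd
          rw [hW0, Function.update_self]
          obtain ⟨z, l', h1⟩ := hhead d hd
          cases hc : hh d with
          | nil =>
            have := hhw d hd
            rw [hc, hcd0] at this
            exact absurd (Eq.symm this) hvs
          | cons y r =>
            rw [hc] at h1
            simp only [List.cons_append, List.cons.injEq] at h1
            exact ⟨z, r, by rw [h1.1]⟩
        · rw [hW0, Function.update_of_ne hdd]
          exact hFam.head d hd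
      · intro d hd hdd
        rw [hW0, Function.update_of_ne hdd]
        exact hFam.walk d hd
      · rw [hW0, Function.update_self]
        have := hhw d0 hd0
        rwa [hcd0] at this
      · intro d hd
        by_cases hdd : d = d0
        · subst hdd
          rw [hW0, Function.update_self]
          exact hhn d hd
        · rw [hW0, Function.update_of_ne hdd]
          exact hWn d hd
      · intro d hd d' hd' hne y hy z hz
        exact hFam.disj d hd d' hd' hne y (hsub d hd y hy).1 z (hsub d' hd' z hz).1
      · intro d hd y hy z hz
        by_cases hdd : d = d0
        · subst hdd
          rw [hW0, Function.update_self] at hy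
          exact hsep d hd e heC y hy z hz
        · exact hFam.disj d hd d0 hd0 hdd y (hsub d hd y hy).1 z (hBW z hz)
      · intro d hd y hy
        exact hFam.nos d hd y (hsub d hd y hy).1
      · intro y hy
        exact hFam.nos d0 hd0 y (hBW y hy)
      · intro d hd y hy
        exact (hsub d hd y hy).2
      · intro y hy hye
        exact hp2 e heC y hy (hye ▸ heC)
    have hl1' : Grapht.Ch (G.Res s e (p2 e) W0) (pa e) l (pb e) := by
      have hmono : ∀ (l : List V) a, Grapht.Ch r a l (pb e) →
          Grapht.Ch (G.Res s e (p2 e) W0) a l (pb e) := by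
        intro l
        induction l with
        | nil => exact fun a h => h
        | cons b l ih =>
          rintro a ⟨⟨h1, g, h2, h3, h4⟩, h5⟩
          exact ⟨⟨h1, g, h2, h3, fun hm => h4 d0 hd0 (hBW _ hm),
            fun d hd hm => h4 d hd (hsub d hd _ hm).1⟩, ih b h5⟩
      exact hmono l _ hl1
    obtain ⟨W', hF', hne'⟩ := hSt.augment hl1' hl2
    obtain ⟨Ls', hL', hL1', -⟩ := hF'.paths
    obtain ⟨P, hP, heP⟩ := huses Ls' hL'
    obtain ⟨d, hd, l', h1, h2, h3⟩ := hL1' P hP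
    rw [h3] at heP
    obtain ⟨y, hy, hye⟩ := List.mem_map.1 heP
    exact hne' d hd y (h1 hy) hye
  have hWI : ∀ d ∈ G.edgeCut {s}, ∀ y ∈ W d, G.I y.2.1 = s(y.1, y.2.2) :=
    fun d hd => Grapht.DW_I (hFam.walk d hd)
  -- `R` is closed under going back along used darts
  have hRback : ∀ d ∈ G.edgeCut {s}, ∀ y ∈ W d, y.2.1 ≠ e → y.1 ≠ s → y.2.2 ∈ R → y.1 ∈ R := by
    intro d hd y hy hye hys hyR
    refine hRstep _ _ hyR ⟨hys, y.2.1, ?_, hye, ?_⟩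
    · rw [hWI d hd y hy, Sym2.eq_swap]
    · intro d' hd' hm
      by_cases hdd : d = d'
      · subst hdd
        have := List.inj_on_of_nodup_map (hWn d hd) hy hm rfl
        exact Grapht.I_ne (hWI d hd y hy) (congrArg (fun x => x.1) this)
      · exact hFam.disj d hd d' hd' hdd y hy _ hm rfl
  have htR : t ∉ R := by
    intro ht
    have key : ∀ (l : List (V × E × V)) a, G.DW a l t → l ⊆ p2 e → a ∈ R := by
      intro l
      induction l with
      | nil =>
        intro a ha _
        have : a = t := ha
        rw [this]
        exact ht
      | cons y l ih =>
        rintro a ⟨h1, h2, h3⟩ hsub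
        have hy : y ∈ p2 e := hsub (by simp)
        rw [h1]
        refine hRback d0 hd0 y ((hWmem d0 y).2 (Or.inr (Or.inr (by rw [hcd0]; exact hy)))) ?_ ?_ ?_
        · intro hye
          exact hp2 e heC y hy (hye ▸ heC)
        · intro hys
          exact (hp2X e heC y hy).1 (hys ▸ hsX)
        · exact ih _ h3 (fun z hz => hsub (by simp [hz]))
    exact hwR (key (p2 e) _ (hpw2 e heC) (List.Subset.refl _))
  have hunused : ∀ g ∈ C, (∀ d ∈ G.edgeCut {s}, cc d ≠ g) → pa g ∉ R := by
    intro g hg hgcc hga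
    have hgW : ∀ d ∈ G.edgeCut {s}, ∀ y ∈ W d, y.2.1 ≠ g := by
      intro d hd y hy hyg
      have := hWC d hd y hy (hyg ▸ hg)
      rw [this] at hyg
      exact hgcc d hd hyg
    have hgb : pb g ∈ R := by
      refine hRstep _ _ hga ⟨fun h => hpb g hg (h ▸ hsX), g, hpI g hg, ?_, ?_⟩
      · rintro rfl
        exact hgcc d0 hd0 hcd0
      · intro d hd hm
        exact hgW d hd _ hm rfl
    have key : ∀ (l : List (V × E × V)) a, G.DW a l t → l ⊆ p2 g → a ∈ R → t ∈ R := by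
      intro l
      induction l with
      | nil =>
        intro a ha _ haR
        have : a = t := ha
        rw [← this]
        exact haR
      | cons y l ih =>
        rintro a ⟨h1, h2, h3⟩ hsub haR
        have hy : y ∈ p2 g := hsub (by simp)
        refine ih _ h3 (fun z hz => hsub (by simp [hz])) ?_
        refine hRstep _ _ haR ⟨fun h => (hp2X g hg y hy).2 (h ▸ hsX), y.2.1, h1 ▸ h2, ?_, ?_⟩
        · intro hye
          exact hp2 g hg y hy (hye ▸ heC)
        · intro d hd hm
          rcases (hWmem d _).1 hm with h | h | h
          · exact hsep d hd g hg _ h y hy rfl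
          · have h' : y.2.1 = cc d := congrArg (fun x => x.2.1) h
            exact hp2 g hg y hy (h' ▸ hcC d hd)
          · exact hp2disj _ (hcC d hd) g hg (hgcc d hd) _ h y hy rfl
    exact htR (key _ _ (hpw2 g hg) (List.Subset.refl _) hgb)
  -- the new cut
  set Y : Set V := {x | (x ∈ R ∨ x = s) ∧ x ∈ X} with hY
  have hsY : s ∈ Y := ⟨Or.inr rfl, hsX⟩
  have htY : t ∉ Y := fun h => htX h.2
  have hD1 : ∀ g y z, G.I g = s(y, z) → y ∈ Y → z ∉ Y → ∃ d ∈ G.edgeCut {s}, (y, g, z) ∈ W d := by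
    intro g y z hI hy hz
    have hzs : z ≠ s := fun h => hz (h ▸ hsY)
    by_cases hys : y = s
    · subst hys
      have hg : g ∈ G.edgeCut {y} := ⟨y, z, hI, rfl, hzs⟩
      obtain ⟨z', l, h1⟩ := hFam.head g hg
      have h2 := hWI g hg (y, g, z') (by rw [h1]; simp)
      refine ⟨g, hg, ?_⟩
      rcases Grapht.I_cases hI h2 with ⟨-, h⟩ | ⟨-, h⟩
      · rw [h1, h]; simp
      · exact absurd h hzs
    · have hyR : y ∈ R := hy.1.resolve_right hys
      have hused : g ∈ C → (∃ d ∈ G.edgeCut {s}, cc d = g) →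
          ∃ d ∈ G.edgeCut {s}, (y, g, z) ∈ W d := by
        rintro hgC ⟨d, hd, rfl⟩
        obtain ⟨h1, h2⟩ := hCend _ hgC y z hI hy.2
        exact ⟨d, hd, (hWmem d _).2 (Or.inr (Or.inl (by rw [h1, h2])))⟩
      by_cases hgC : g ∈ C
      · apply hused hgC
        by_contra hcon
        push Not at hcon
        exact hunused g hgC hcon ((hCend _ hgC y z hI hy.2).1 ▸ hyR)
      · have hzX : z ∈ X := by
          by_contra hzX
          exact hgC (hX2 g y z hI hy.2 hzX)
        by_contra hcon
        push Not at hcon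
        exact hz ⟨Or.inl (hRstep _ _ hyR ⟨hzs, g, hI, fun h => hgC (h ▸ heC), hcon⟩), hzX⟩
  have hD2 : ∀ d ∈ G.edgeCut {s}, ∀ y ∈ W d, y.2.2 ∈ Y → y.1 ∈ Y := by
    intro d hd y hy hyY
    have hyR : y.2.2 ∈ R := hyY.1.resolve_right (hFam.nos d hd y hy)
    have hyh : y ∈ hh d := by
      rcases (hWmem d y).1 hy with h | h | h
      · exact h
      · have h' : y.2.2 = pb (cc d) := congrArg (fun x => x.2.2) h
        exact absurd (h' ▸ hyY.2) (hpb _ (hcC d hd))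
      · exact absurd hyY.2 (hp2X _ (hcC d hd) y h).2
    have hX' := hhX d hd y hyh
    by_cases hys : y.1 = s
    · rw [hys]; exact hsY
    · exact ⟨Or.inl (hRback d hd y hy (fun h => hX'.2.2 (h ▸ heC)) hys hyR), hX'.1⟩
  have huq : ∀ d ∈ G.edgeCut {s}, ∃ q ∈ W d, q.1 ∈ Y ∧ q.2.2 ∉ Y ∧
      ∀ y ∈ W d, y.2.1 ∈ G.edgeCut Y → y = q := by
    intro d hd
    have hw := hFam.walk d hd
    obtain ⟨l₁, u, g, w, l₂, h1, h2, h3, h4⟩ := Grapht.DW_exit hw hsY htY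
    have hno' := hD2 d hd
    rw [h1] at hw hno'
    obtain ⟨c, -, -, -, h5⟩ := Grapht.DW_append.1 hw
    have h6 := Grapht.DW_outside h5 h4 (fun x hx => hno' x (by simp [hx]))
    refine ⟨(u, g, w), by rw [h1]; simp, h3, h4, ?_⟩
    intro y hy hyD
    obtain ⟨a, b, hI, ha, hb⟩ := hyD
    have hIy := hWI d hd y hy
    rw [h1] at hy
    simp only [List.mem_append, List.mem_cons] at hy
    rcases hy with hy | hy | hy
    · have := h2 y hy
      rcases Grapht.I_cases hI hIy with ⟨-, h⟩ | ⟨-, h⟩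
      · exact absurd (h ▸ this.2) hb
      · exact absurd (h ▸ this.1) hb
    · exact hy
    · have := h6 y hy
      rcases Grapht.I_cases hI hIy with ⟨h, -⟩ | ⟨h, -⟩
      · exact absurd (h ▸ ha) this.1
      · exact absurd (h ▸ ha) this.2
  have hcross : ∀ d ∈ G.edgeCut {s}, ∀ l, l ⊆ W d → G.DW s l t →
      ∃ y ∈ l, y.2.1 ∈ G.edgeCut Y := by
    intro d hd l hl hw
    obtain ⟨l₁, u, g, w, l₂, h1, h2, h3, h4⟩ := Grapht.DW_exit hw hsY htY
    have hm : (u, g, w) ∈ l := by rw [h1]; simp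
    exact ⟨(u, g, w), hm, u, w, hWI d hd _ (hl hm), h3, h4⟩
  have hDEM : G.IsEMABCut {s} {t} (G.edgeCut Y) := by
    refine ⟨?_, Ls, hLs.1, hLs.2.1, ?_, ?_⟩
    · intro P hP
      obtain ⟨l, h1, h2, -⟩ := Grapht.path_darts hst P hP
      obtain ⟨l₁, u, g, w, l₂, h3, h4, h5, h6⟩ := Grapht.DW_exit h1 hsY htY
      have hm : (u, g, w) ∈ l := by rw [h3]; simp
      exact ⟨g, ⟨u, w, Grapht.DW_I h1 _ hm, h5, h6⟩, by rw [h2]; exact List.mem_map.2 ⟨_, hm, rfl⟩⟩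
    · intro P hP
      obtain ⟨d, hd, l, h1, h2, h3⟩ := hLs1 P hP
      obtain ⟨q, hq, -, -, hqu⟩ := huq d hd
      obtain ⟨y, hy, hyD⟩ := hcross d hd l h1 h2
      refine ⟨y.2.1, ⟨hyD, by rw [h3]; exact List.mem_map.2 ⟨y, hy, rfl⟩⟩, ?_⟩
      rintro g ⟨hgD, hgP⟩
      rw [h3] at hgP
      obtain ⟨z, hz, rfl⟩ := List.mem_map.1 hgP
      rw [hqu z (h1 hz) hgD, hqu y (h1 hy) hyD]
    · intro g hg
      have hg' := hg
      obtain ⟨y, z, hI, hy, hz⟩ := hg'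
      obtain ⟨d, hd, hm⟩ := hD1 g y z hI hy hz
      obtain ⟨q, hq, -, -, hqu⟩ := huq d hd
      obtain ⟨P, hP, l, h1, h2, h3⟩ := hLs2 d hd
      obtain ⟨x, hx, hxD⟩ := hcross d hd l h1 h2
      refine ⟨P, hP, ?_⟩
      have hxy : x = (y, g, z) := (hqu x (h1 hx) hxD).trans (hqu _ hm hg).symm
      rw [h3]
      exact List.mem_map.2 ⟨x, hx, by rw [hxy]⟩
  have heD : e ∈ G.edgeCut Y :=
    ⟨pa e, pb e, hpI e heC, ⟨Or.inl hvR, hpa e heC⟩, fun h => hpb e heC h.2⟩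
  have hle := hmin _ hDEM heD (pP f) (hPst _ (hpP f hfC))
  have hfY : pa f ∉ Y := by
    rintro ⟨h | h, -⟩
    · exact hunused f hfC hfcc h
    · have hfs : f ∈ G.edgeCut {s} :=
        ⟨s, pb f, h ▸ hpI f hfC, rfl, fun h' => hpb f hfC ((show pb f = s from h') ▸ hsX)⟩
      obtain ⟨z, l, h1⟩ := hFam.head f hfs
      have := hWC f hfs (s, f, z) (by rw [h1]; simp) hfC
      exact hfcc f hfs (congrArg (fun x => x.2.1) this).symm
  obtain ⟨l₁, u, g, w, l₂, h1, h2, h3, h4⟩ := Grapht.DW_exit (hpw1 f hfC) hsY hfY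
  have hgD : g ∈ G.edgeCut Y :=
    ⟨u, w, Grapht.DW_I (hpw1 f hfC) (u, g, w) (by rw [h1]; simp), h3, h4⟩
  have hPe := hpe f hfC
  have hlt : l₁.length < (p1 f).length := by rw [h1]; simp
  have hlt' : l₁.length < (pP f).edges.length := by rw [hPe]; simp; omega
  have hget : ∀ i (hi : i < (p1 f).length) (hi' : i < (pP f).edges.length),
      (pP f).edges[i] = ((p1 f)[i]).2.1 := by
    intro i hi hi'
    simp [hPe, List.getElem_append_left, hi]
  obtain ⟨j, hj, hjC⟩ := hle ⟨l₁.length, hlt'⟩ (by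
    rw [List.get_eq_getElem, hget _ hlt]
    simp only [h1]
    simpa using hgD)
  rw [List.get_eq_getElem, hget j (lt_of_le_of_lt hj hlt)] at hjC
  exact hp1 f hfC _ (List.getElem_mem _) hjC
end
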